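/- If a real line arrangement 𝓛 of ℓ lines is the union 𝓛' ∪ L where L is a simple line (L meets every line of 𝓛' in a distinct double point), then π₁(ℂ² \ 𝓛) ≅ π₁(ℂ² \ 𝓛') × ℤ. -/

import Mathlib

open scoped Classical
/-- A real line, viewed inside `ℂ²`: the complex solution set of a real affine
equation. -/
def IsRealCLine (l : Set (ℂ × ℂ)) : Prop :=
  ∃ a b c : ℝ, (a, b) ≠ (0, 0) ∧
    l = {p : ℂ × ℂ | (a : ℂ) * p.1 + (b : ℂ) * p.2 = (c : ℂ)}


set_option linter.unusedSectionVars false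
set_option linter.unusedSimpArgs false

namespace SL
open CategoryTheory unitInterval


section general
variable {X : Type*} [TopologicalSpace X]

/-- The class of a path as a morphism of the fundamental groupoid. -/
def cl {p q : X} (γ : Path p q) : FundamentalGroupoid.mk p ⟶ FundamentalGroupoid.mk q :=
  Path.Homotopic.Quotient.mk γ

lemma cl_trans {p q r : X} (γ : Path p q) (δ : Path q r) : cl (γ.trans δ) = cl γ ≫ cl δ := rfl

lemma cl_refl (p : X) : cl (Path.refl p) = 𝟙 _ := rfl

lemma cl_symm {p q : X} (γ : Path p q) : cl γ.symm = inv (cl γ) := by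
  rw [← Groupoid.inv_eq_inv]; rfl

lemma cl_eq {p q : X} {γ δ : Path p q} (h : γ.Homotopic δ) : cl γ = cl δ := Quotient.sound h

lemma cl_surj {p q : X} (g : FundamentalGroupoid.mk p ⟶ FundamentalGroupoid.mk q) :
    ∃ γ : Path p q, g = cl γ := by
  obtain ⟨γ, h⟩ := Quotient.exists_rep g
  exact ⟨γ, h.symm⟩

/-- A continuous square gives a commutative square of path classes. -/
lemma square {p q r s : X} (Q : I × I → X) (hQ : Continuous Q)
    (γ : Path p q) (δ : Path q s) (δ' : Path p r) (γ' : Path r s)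
    (h1 : ∀ t, Q (t, 0) = γ t) (h2 : ∀ t, Q (1, t) = δ t)
    (h3 : ∀ t, Q (0, t) = δ' t) (h4 : ∀ t, Q (t, 1) = γ' t) :
    cl γ ≫ cl δ = cl δ' ≫ cl γ' := by
  let a : Path ((0 : I), (0 : I)) (1, 0) :=
    { toFun := fun t => (t, 0), continuous_toFun := by fun_prop, source' := rfl, target' := rfl }
  let b : Path ((1 : I), (0 : I)) (1, 1) :=
    { toFun := fun t => (1, t), continuous_toFun := by fun_prop, source' := rfl, target' := rfl }
  let c : Path ((0 : I), (0 : I)) (0, 1) :=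
    { toFun := fun t => (0, t), continuous_toFun := by fun_prop, source' := rfl, target' := rfl }
  let d : Path ((0 : I), (1 : I)) (1, 1) :=
    { toFun := fun t => (t, 1), continuous_toFun := by fun_prop, source' := rfl, target' := rfl }
  have hp : p = Q (0, 0) := by rw [h1]; simp
  have hq : q = Q (1, 0) := by rw [h1]; simp
  have hr : r = Q (0, 1) := by rw [h4]; simp
  have hs : s = Q (1, 1) := by rw [h4]; simp
  subst hp hq hr hs
  have e1 : γ = a.map hQ := by ext t; exact (h1 t).symm
  have e2 : δ = b.map hQ := by ext t; exact (h2 t).symm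
  have e3 : δ' = c.map hQ := by ext t; exact (h3 t).symm
  have e4 : γ' = d.map hQ := by ext t; exact (h4 t).symm
  have : ContractibleSpace I := (convex_Icc (0 : ℝ) 1).contractibleSpace ⟨0, by simp⟩
  have : SimplyConnectedSpace (I × I) := by infer_instance
  have hh : (a.trans b).Homotopic (c.trans d) := SimplyConnectedSpace.paths_homotopic _ _
  have := hh.map ⟨Q, hQ⟩
  rw [e1, e2, e3, e4, ← cl_trans, ← cl_trans]
  apply cl_eq
  rw [← Path.map_trans, ← Path.map_trans]
  exact this

/-- Induction principle: path classes are generated by paths subordinate to an open cover. -/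
theorem gen {ι : Type*} (U : ι → Set X) (hU : ∀ i, IsOpen (U i)) (hcov : ∀ x, ∃ i, x ∈ U i)
    (P : ∀ {p q : X}, (FundamentalGroupoid.mk p ⟶ FundamentalGroupoid.mk q) → Prop)
    (hcomp : ∀ {p q r : X} (g : FundamentalGroupoid.mk p ⟶ FundamentalGroupoid.mk q)
      (h : FundamentalGroupoid.mk q ⟶ FundamentalGroupoid.mk r), P g → P h → P (g ≫ h))
    (hsmall : ∀ {p q : X} (γ : Path p q) (i : ι), (∀ t, γ t ∈ U i) → P (cl γ))
    {p q : X} (g : FundamentalGroupoid.mk p ⟶ FundamentalGroupoid.mk q) : P g := by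
  obtain ⟨γ, rfl⟩ := cl_surj g
  obtain ⟨t, ht0, htm, ⟨n, htn⟩, hti⟩ :=
    exists_monotone_Icc_subset_open_cover_unitInterval (c := fun i => γ ⁻¹' U i)
      (fun i => (hU i).preimage γ.continuous)
      (fun x _ => by simpa using hcov (γ x))
  have key : ∀ k, P (cl (γ.subpath 0 (t k))) := by
    intro k
    induction k with
    | zero =>
      obtain ⟨i, hi⟩ := hti 0
      apply hsmall _ i
      intro s
      rw [ht0, Path.subpath_self]
      apply hi
      simp only [Set.mem_Icc]
      exact ⟨ht0.le, bot_le⟩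
    | succ k ih =>
      obtain ⟨i, hi⟩ := hti k
      have h2 : P (cl (γ.subpath (t k) (t (k+1)))) := by
        apply hsmall _ i
        intro s
        have : (γ.subpath (t k) (t (k+1))) s ∈ Set.range (γ.subpath (t k) (t (k+1))) := ⟨s, rfl⟩
        rw [Path.range_subpath_of_le _ _ _ (htm (Nat.le_succ k))] at this
        obtain ⟨z, hz, e⟩ := this
        rw [← e]
        exact hi hz
      have := hcomp _ _ ih h2
      rw [← cl_trans, cl_eq ⟨Path.Homotopy.subpathTransSubpath γ 0 (t k) (t (k+1))⟩] at this
      exact this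
  have := key n
  rw [htn n le_rfl, Path.subpath_zero_one] at this
  have e : ∀ {p' q' : X} (hp : p' = p) (hq : q' = q), P (cl (γ.cast hp hq)) → P (cl γ) := by
    intro p' q' hp hq; subst hp hq; exact id
  exact e _ _ this

end general

section cocycle
variable {K : Type*} [Group K]

lemma cocycle_split {E : Type*} [NormedAddCommGroup E] [NormedSpace ℝ E] (g : E → E → K)
    (δ : ℝ) (hδ : 0 < δ)
    (hg : ∀ z w v, dist z w < δ → dist z v < δ → dist w v < δ → g z w * g w v = g z v) :
    ∃ φ : E → K, ∀ z w, ‖z‖ ≤ 1 → ‖w‖ ≤ 1 → dist z w < δ / 2 → φ z * g z w = φ w := by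
  obtain ⟨N, hN⟩ := exists_nat_gt (2 / δ)
  have hNpos : (0 : ℝ) < N := lt_trans (by positivity) hN
  have hN2 : 1 / (N : ℝ) < δ / 2 := by
    rw [div_lt_div_iff₀ hNpos (by norm_num)]
    rw [div_lt_iff₀ hδ] at hN
    linarith
  let φ : ℕ → E → K := fun k z =>
    Nat.rec 1 (fun j r => r * g (((j : ℝ) / N) • z) ((((j + 1 : ℕ) : ℝ) / N) • z)) k
  have hφs : ∀ k z, φ (k + 1) z = φ k z * g (((k : ℝ) / N) • z) ((((k + 1 : ℕ) : ℝ) / N) • z) :=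
    fun k z => rfl
  have g1 : ∀ z, g z z = 1 := by
    intro z
    have := hg z z z (by simpa) (by simpa) (by simpa)
    simpa using this
  have key : ∀ k : ℕ, k ≤ N → ∀ z w, ‖z‖ ≤ 1 → ‖w‖ ≤ 1 → dist z w < δ / 2 →
      φ k z * g (((k : ℝ) / N) • z) (((k : ℝ) / N) • w) = φ k w := by
    intro k
    induction k with
    | zero =>
      intro _ z w _ _ _
      simp [φ, g1]
    | succ k ih =>
      intro hk z w hz hw hzw
      have step : ∀ v : E, ‖v‖ ≤ 1 →
          dist (((k : ℝ) / N) • v) ((((k + 1 : ℕ) : ℝ) / N) • v) < δ / 2 := by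
        intro v hv
        rw [dist_eq_norm, ← sub_smul, norm_smul]
        have : ((k : ℝ) / N) - (((k + 1 : ℕ) : ℝ) / N) = - (1 / N) := by push_cast; ring
        rw [this, norm_neg, Real.norm_of_nonneg (by positivity)]
        have : 1 / (N : ℝ) * ‖v‖ ≤ 1 / N * 1 := by gcongr
        linarith
      have rung : ∀ j : ℕ, j ≤ N → dist (((j : ℝ) / N) • z) (((j : ℝ) / N) • w) < δ / 2 := by
        intro j hj
        rw [dist_smul₀, Real.norm_of_nonneg (by positivity)]
        have h1 : (j : ℝ) / N ≤ 1 := by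
          rw [div_le_one hNpos]; exact_mod_cast hj
        have := mul_le_mul_of_nonneg_right h1 (dist_nonneg (x := z) (y := w))
        linarith
      have diag : dist (((k : ℝ) / N) • z) ((((k + 1 : ℕ) : ℝ) / N) • w) < δ := by
        have h1 := rung k (by omega)
        have h2 := step w hw
        have := dist_triangle (((k : ℝ) / N) • z) (((k : ℝ) / N) • w) ((((k + 1 : ℕ) : ℝ) / N) • w)
        linarith
      rw [hφs, hφs, mul_assoc, hg _ _ _ (by linarith [step z hz]) diag
        (by linarith [rung (k+1) hk]), ← ih (by omega) z w hz hw hzw, mul_assoc,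
        hg _ _ _ (by linarith [rung k (by omega)]) diag (by linarith [step w hw])]
  refine ⟨φ N, fun z w hz hw hzw => ?_⟩
  have := key N le_rfl z w hz hw hzw
  rwa [div_self hNpos.ne', one_smul, one_smul] at this

variable {X : Type*} [TopologicalSpace X]

/-- the kernel half of the van Kampen theorem -/
theorem vk_ker (U V : Set X) (hU : IsOpen U) (hV : IsOpen V) (hUV : ∀ x, x ∈ U ∨ x ∈ V)
    (φ : C(I, X) → K) (hconst : ∀ x, φ (ContinuousMap.const I x) = 1)
    (hsq : ∀ Q : C(I × I, X), ((∀ z, Q z ∈ U) ∨ (∀ z, Q z ∈ V)) →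
      φ (Q.comp ⟨fun t => (t, 0), by fun_prop⟩) * φ (Q.comp ⟨fun t => (1, t), by fun_prop⟩) =
      φ (Q.comp ⟨fun t => (0, t), by fun_prop⟩) * φ (Q.comp ⟨fun t => (t, 1), by fun_prop⟩))
    (H : C(I × I, X)) (hHU : ∀ t, H (t, 0) ∈ U) (x : X) (h1 : ∀ t, H (t, 1) = x)
    (h2 : ∀ t, H (0, t) = x) (h3 : ∀ t, H (1, t) = x) :
    φ (H.comp ⟨fun t => (t, 0), by fun_prop⟩) = 1 := by
  let pr : ℝ → I := Set.projIcc 0 1 zero_le_one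
  have hpr : Continuous pr := continuous_projIcc
  let h : C(ℝ × ℝ, X) := ⟨fun z => H (pr z.1, pr z.2), by fun_prop⟩
  let ln : (ℝ × ℝ) → (ℝ × ℝ) → C(I, X) := fun z w =>
    h.comp ⟨fun t : I => AffineMap.lineMap z w (t : ℝ), by
      simp only [AffineMap.lineMap_apply_module]; fun_prop⟩
  let g : (ℝ × ℝ) → (ℝ × ℝ) → K := fun z w => φ (ln z w)
  have tri : ∀ (W : Set X), (W = U ∨ W = V) → ∀ z w v : ℝ × ℝ,
      (∀ s t : I, h (AffineMap.lineMap (AffineMap.lineMap z w (s : ℝ)) v (t : ℝ)) ∈ W) →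
      g z w * g w v = g z v := by
    intro W hW z w v hin
    let Q : C(I × I, X) := h.comp ⟨fun st : I × I =>
      AffineMap.lineMap (AffineMap.lineMap z w (st.1 : ℝ)) v (st.2 : ℝ), by
      simp only [AffineMap.lineMap_apply_module]; fun_prop⟩
    have := hsq Q (by
      rcases hW with rfl | rfl
      · left; intro z; exact hin _ _
      · right; intro z; exact hin _ _)
    have e1 : Q.comp ⟨fun t => (t, 0), by fun_prop⟩ = ln z w := by
      ext t; simp [Q, ln]
    have e2 : Q.comp ⟨fun t => (1, t), by fun_prop⟩ = ln w v := by
      ext t; simp [Q, ln]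
    have e3 : Q.comp ⟨fun t => (0, t), by fun_prop⟩ = ln z v := by
      ext t; simp [Q, ln]
    have e4 : Q.comp ⟨fun t => (t, 1), by fun_prop⟩ = ContinuousMap.const I (h v) := by
      ext t; simp [Q]
    rw [e1, e2, e3, e4, hconst, mul_one] at this
    exact this
  obtain ⟨δ, hδ, hleb⟩ := lebesgue_number_lemma_of_metric (s := (Set.univ : Set (I × I)))
    (c := fun b : Bool => H ⁻¹' (if b then U else V)) isCompact_univ
    (by
      intro b
      apply IsOpen.preimage H.continuous
      cases b
      · simpa using hV
      · simpa using hU)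
    (by
      intro z _
      rcases hUV (H z) with hz | hz
      · exact Set.mem_iUnion.2 ⟨true, by simpa using hz⟩
      · exact Set.mem_iUnion.2 ⟨false, by simpa using hz⟩)
  have hloc : ∀ z : ℝ × ℝ, ∃ W : Set X, (W = U ∨ W = V) ∧ ∀ w ∈ Metric.ball z δ, h w ∈ W := by
    intro z
    obtain ⟨b, hb⟩ := hleb (pr z.1, pr z.2) trivial
    refine ⟨if b then U else V, by cases b <;> simp, fun w hw => ?_⟩
    have : (pr w.1, pr w.2) ∈ Metric.ball (pr z.1, pr z.2) δ := by
      rw [Metric.mem_ball, Prod.dist_eq] at hw ⊢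
      refine lt_of_le_of_lt (max_le_max ?_ ?_) hw
      · rw [Subtype.dist_eq, Real.dist_eq, Real.dist_eq]; exact Set.abs_projIcc_sub_projIcc zero_le_one
      · rw [Subtype.dist_eq, Real.dist_eq, Real.dist_eq]; exact Set.abs_projIcc_sub_projIcc zero_le_one
    exact hb this
  obtain ⟨ψ, hψ⟩ := cocycle_split g δ hδ (by
    intro z w v hzw hzv _
    obtain ⟨W, hW, hin⟩ := hloc z
    refine tri W hW z w v fun s t => hin _ ?_
    have hc := convex_ball z δ
    have hz : z ∈ Metric.ball z δ := Metric.mem_ball_self hδ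
    have hw : w ∈ Metric.ball z δ := by rwa [Metric.mem_ball']
    have hv : v ∈ Metric.ball z δ := by rwa [Metric.mem_ball']
    exact hc.lineMap_mem (hc.lineMap_mem hz hw s.2) hv t.2)
  -- subdivide
  obtain ⟨N, hN⟩ := exists_nat_gt (2 / δ)
  have hNpos : (0 : ℝ) < N := lt_trans (by positivity) hN
  have hN2 : 1 / (N : ℝ) < δ / 2 := by
    rw [div_lt_div_iff₀ hNpos (by norm_num)]
    rw [div_lt_iff₀ hδ] at hN
    linarith
  have hseg : ∀ a b : ℝ × ℝ, ∀ k : ℕ, k + 1 ≤ N → ‖a‖ ≤ 1 → ‖b‖ ≤ 1 → dist a b ≤ 1 →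
      ψ (AffineMap.lineMap a b ((k : ℝ) / N)) * g (AffineMap.lineMap a b ((k : ℝ) / N))
        (AffineMap.lineMap a b (((k + 1 : ℕ) : ℝ) / N)) =
        ψ (AffineMap.lineMap a b (((k + 1 : ℕ) : ℝ) / N)) := by
    intro a b k hk ha hb hab
    have hc := convex_closedBall (0 : ℝ × ℝ) 1
    have hu : ∀ j : ℕ, j ≤ N → ‖(AffineMap.lineMap a b ((j : ℝ) / N) : ℝ × ℝ)‖ ≤ 1 := by
      intro j hj
      have := hc.lineMap_mem (x := a) (y := b) (by simpa using ha) (by simpa using hb)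
        (t := (j : ℝ) / N) ⟨by positivity, by rw [div_le_one hNpos]; exact_mod_cast hj⟩
      simpa using this
    apply hψ _ _ (hu k (by omega)) (hu (k+1) hk)
    rw [dist_lineMap_lineMap, Real.dist_eq]
    have : ((k : ℝ) / N) - (((k + 1 : ℕ) : ℝ) / N) = - (1 / N) := by push_cast; ring
    rw [this, abs_neg, abs_of_nonneg (by positivity)]
    have : 1 / (N : ℝ) * dist a b ≤ 1 / N * 1 := by gcongr
    linarith
  have hedge : ∀ a b : ℝ × ℝ, ‖a‖ ≤ 1 → ‖b‖ ≤ 1 → dist a b ≤ 1 →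
      (∀ s : ℝ, h (AffineMap.lineMap a b s) = x) → ψ a = ψ b := by
    intro a b ha hb hab hx
    have : ∀ k : ℕ, k ≤ N → ψ a = ψ (AffineMap.lineMap a b ((k : ℝ) / N)) := by
      intro k
      induction k with
      | zero => simp
      | succ k ih =>
        intro hk
        rw [ih (by omega), ← hseg a b k hk ha hb hab]
        have : ln (AffineMap.lineMap a b ((k : ℝ) / N))
            (AffineMap.lineMap a b (((k + 1 : ℕ) : ℝ) / N)) = ContinuousMap.const I x := by
          ext t
          have : (AffineMap.lineMap (AffineMap.lineMap a b ((k : ℝ) / N))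
            (AffineMap.lineMap a b (((k + 1 : ℕ) : ℝ) / N)) (t : ℝ) : ℝ × ℝ) =
            AffineMap.lineMap a b (AffineMap.lineMap ((k : ℝ) / N) (((k + 1 : ℕ) : ℝ) / N) (t:ℝ)) := by
            rw [AffineMap.apply_lineMap]
          simp only [ln, ContinuousMap.comp_apply, ContinuousMap.coe_mk, this, hx]
          rfl
        simp only [g, this, hconst, mul_one]
    have := this N le_rfl
    rwa [div_self hNpos.ne', AffineMap.lineMap_apply_one] at this
  have pr0 : pr 0 = 0 := Set.projIcc_left _
  have pr1 : pr 1 = 1 := Set.projIcc_right _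
  have E1 : ψ (0, 0) = ψ (0, 1) := by
    apply hedge
    · simp
    · simp
    · simp [Prod.dist_eq]
    · intro s
      simp only [AffineMap.lineMap_apply_module, h, ContinuousMap.coe_mk]
      simp [pr0, h2]
  have E2 : ψ (0, 1) = ψ (1, 1) := by
    apply hedge
    · simp
    · simp
    · simp [Prod.dist_eq]
    · intro s
      simp only [AffineMap.lineMap_apply_module, h, ContinuousMap.coe_mk]
      simp [pr1, h1]
  have E3 : ψ (1, 1) = ψ (1, 0) := by
    apply hedge
    · simp
    · simp
    · simp [Prod.dist_eq]
    · intro s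
      simp only [AffineMap.lineMap_apply_module, h, ContinuousMap.coe_mk]
      simp [pr1, h3]
  have hbot : ∀ k : ℕ, k ≤ N → ψ (0, 0) * g (0, 0) (AffineMap.lineMap (0, 0) (1, 0) ((k : ℝ) / N))
      = ψ (AffineMap.lineMap (0, 0) (1, 0) ((k : ℝ) / N)) := by
    intro k
    induction k with
    | zero =>
      intro _
      have : ln (0, 0) (0, 0) = ContinuousMap.const I (h (0, 0)) := by
        ext t; simp [ln]
      simp [g, this, hconst]
    | succ k ih =>
      intro hk
      rw [← hseg _ _ k hk (by simp) (by simp) (by simp [Prod.dist_eq]), ← ih (by omega), mul_assoc]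
      congr 1
      symm
      apply tri U (Or.inl rfl)
      intro s t
      simp only [AffineMap.lineMap_apply_module, h, ContinuousMap.coe_mk]
      simp [pr0, hHU]
  have := hbot N le_rfl
  rw [div_self hNpos.ne', AffineMap.lineMap_apply_one, ← E3, ← E2, ← E1, mul_eq_left] at this
  have e : ln (0, 0) (1, 0) = H.comp ⟨fun t => (t, 0), by fun_prop⟩ := by
    ext t
    simp only [AffineMap.lineMap_apply_module, h, ContinuousMap.coe_mk, ln, ContinuousMap.comp_apply]
    simp [pr]
  rw [← e]
  exact this

end cocycle
end SL

namespace SL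
open CategoryTheory unitInterval


section sub
variable {E : Type*} [NormedAddCommGroup E] [NormedSpace ℝ E] {T : Set E}

/-- A path in a subset from a function. -/
def mkp (c : I → E) (hc : Continuous c) (hT : ∀ t, c t ∈ T) {p q : T} (h0 : c 0 = p)
    (h1 : c 1 = q) : Path p q where
  toFun t := ⟨c t, hT t⟩
  continuous_toFun := hc.subtype_mk _
  source' := Subtype.ext h0
  target' := Subtype.ext h1

@[simp] lemma mkp_coe (c : I → E) (hc : Continuous c) (hT : ∀ t, c t ∈ T) {p q : T} (h0 : c 0 = p)
    (h1 : c 1 = q) (t : I) : ((mkp c hc hT h0 h1 t : T) : E) = c t := rfl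

lemma continuous_coe_path {p q : T} (γ : Path p q) : Continuous fun t => ((γ t : T) : E) :=
  continuous_subtype_val.comp γ.continuous

/-- A square in a subset. -/
lemma squareT {p q r s : T} (Q : I × I → E) (hQ : Continuous Q) (hT : ∀ z, Q z ∈ T)
    (γ : Path p q) (δ : Path q s) (δ' : Path p r) (γ' : Path r s)
    (h1 : ∀ t, Q (t, 0) = γ t) (h2 : ∀ t, Q (1, t) = δ t)
    (h3 : ∀ t, Q (0, t) = δ' t) (h4 : ∀ t, Q (t, 1) = γ' t) :
    cl γ ≫ cl δ = cl δ' ≫ cl γ' :=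
  square (fun z => (⟨Q z, hT z⟩ : T)) (hQ.subtype_mk _) γ δ δ' γ'
    (fun t => Subtype.ext (h1 t)) (fun t => Subtype.ext (h2 t))
    (fun t => Subtype.ext (h3 t)) (fun t => Subtype.ext (h4 t))

/-- the segment as a path -/
def seg (C : Set E) (hC : Convex ℝ C) (hCT : C ⊆ T) (p q : T) (hp : (p : E) ∈ C)
    (hq : (q : E) ∈ C) : Path p q :=
  mkp (fun t => AffineMap.lineMap (p : E) (q : E) (t : ℝ))
    (by simp only [AffineMap.lineMap_apply_module]; fun_prop)
    (fun t => hCT (hC.lineMap_mem hp hq t.2)) (by simp) (by simp)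

lemma seg_mem (C : Set E) (hC : Convex ℝ C) (hCT : C ⊆ T) (p q : T) (hp : (p : E) ∈ C)
    (hq : (q : E) ∈ C) (t : I) : ((seg C hC hCT p q hp hq t : T) : E) ∈ C :=
  hC.lineMap_mem hp hq t.2

lemma convex_eq (C : Set E) (hC : Convex ℝ C) (hCT : C ⊆ T) {p q : T} (γ δ : Path p q)
    (hγ : ∀ t, (γ t : E) ∈ C) (hδ : ∀ t, (δ t : E) ∈ C) : cl γ = cl δ := by
  have h1 := continuous_coe_path γ
  have h2 := continuous_coe_path δ
  have := squareT (T := T) (fun z : I × I => AffineMap.lineMap (γ z.1 : E) (δ z.1 : E) (z.2 : ℝ))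
    (by simp only [AffineMap.lineMap_apply_module]; fun_prop)
    (fun z => hCT (hC.lineMap_mem (hγ _) (hδ _) z.2.2))
    γ (Path.refl q) (Path.refl p) δ (by simp) (by simp) (by simp) (by simp)
  simpa [cl_refl] using this

lemma convex_comp (C : Set E) (hC : Convex ℝ C) (hCT : C ⊆ T) {p q r : T} (γ : Path p q)
    (δ : Path q r) (ε : Path p r)
    (hγ : ∀ t, (γ t : E) ∈ C) (hδ : ∀ t, (δ t : E) ∈ C) (hε : ∀ t, (ε t : E) ∈ C) :
    cl γ ≫ cl δ = cl ε := by
  rw [← cl_trans]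
  refine convex_eq C hC hCT _ _ (fun t => ?_) hε
  have : (γ.trans δ) t ∈ Set.range (γ.trans δ) := ⟨t, rfl⟩
  rw [Path.trans_range] at this
  rcases this with ⟨s, hs⟩ | ⟨s, hs⟩
  · rw [← hs]; exact hγ s
  · rw [← hs]; exact hδ s

end sub

/-- Normalised data: intercepts `A` and slopes `f a`, with `f` locally constant near `A`. -/
structure Data (A : Finset ℝ) (f : ℂ → ℝ) : Prop where
  cont : Continuous f
  bd : ∀ x, |f x| ≤ 1 / 8
  loc : ∀ a ∈ A, ∀ x : ℂ, ‖x - (a : ℂ)‖ ≤ 1 → f x = f (a : ℂ)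

/-- complement of the lines `x = a + f a * y` -/
def S' (A : Finset ℝ) (f : ℂ → ℝ) : Set (ℂ × ℂ) :=
  {p | ∀ a ∈ A, p.1 ≠ (a : ℂ) + (f (a : ℂ) : ℂ) * p.2}

/-- complement of the lines `x = a + f a * y` and of `y = 0` -/
def S (A : Finset ℝ) (f : ℂ → ℝ) : Set (ℂ × ℂ) := {p | p ∈ S' A f ∧ p.2 ≠ 0}

/-- shear -/
def sh (f : ℂ → ℝ) (p : ℂ × ℂ) (y : ℂ) : ℂ × ℂ := (p.1 + (f p.1 : ℂ) * (y - p.2), y)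

@[simp] lemma sh_self (f : ℂ → ℝ) (p : ℂ × ℂ) : sh f p p.2 = p := by simp [sh]
@[simp] lemma sh_snd (f : ℂ → ℝ) (p : ℂ × ℂ) (y : ℂ) : (sh f p y).2 = y := rfl

variable {A : Finset ℝ} {f : ℂ → ℝ}

lemma isOpen_S' : IsOpen (S' A f) := by
  have : S' A f = ⋂ a ∈ A, {p : ℂ × ℂ | p.1 ≠ (a : ℂ) + (f (a : ℂ) : ℂ) * p.2} := by
    ext p; simp [S']
  rw [this]
  apply isOpen_biInter_finset
  intro a _
  exact isOpen_ne_fun (by fun_prop) (by fun_prop)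

lemma isOpen_S : IsOpen (S A f) :=
  isOpen_S'.inter (isOpen_ne_fun (by fun_prop) (by fun_prop))

lemma sh_mem (hD : Data A f) {p : ℂ × ℂ} (hp : p ∈ S' A f) (hy : ‖p.2‖ ≤ 1) {y : ℂ} (hy' : ‖y‖ ≤ 1) :
    sh f p y ∈ S' A f := by
  intro a ha h
  simp only [sh] at h
  by_cases hx : ‖p.1 - a‖ ≤ 1
  · rw [hD.loc a ha _ hx] at h
    exact hp a ha (by linear_combination h)
  · have e : p.1 - a = (f a : ℂ) * y - (f p.1 : ℂ) * (y - p.2) := by linear_combination h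
    have n1 : ‖(f a : ℂ) * y‖ ≤ 1 / 8 * 1 := by
      rw [norm_mul, Complex.norm_real, Real.norm_eq_abs]
      exact mul_le_mul (hD.bd _) hy' (norm_nonneg _) (by norm_num)
    have n2 : ‖(f p.1 : ℂ) * (y - p.2)‖ ≤ 1 / 8 * 2 := by
      rw [norm_mul, Complex.norm_real, Real.norm_eq_abs]
      refine mul_le_mul (hD.bd _) ?_ (norm_nonneg _) (by norm_num)
      have := norm_sub_le y p.2
      linarith
    have := norm_sub_le ((f a : ℂ) * y) ((f p.1 : ℂ) * (y - p.2))
    rw [e] at hx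
    linarith

lemma sh_memS (hD : Data A f) {p : ℂ × ℂ} (hp : p ∈ S A f) (hy : ‖p.2‖ ≤ 1) {y : ℂ} (hy' : ‖y‖ ≤ 1)
    (h0 : y ≠ 0) : sh f p y ∈ S A f := ⟨sh_mem hD hp.1 hy hy', h0⟩

lemma continuous_sh (hD : Data A f) {Z : Type*} [TopologicalSpace Z] {P : Z → ℂ × ℂ} {y : Z → ℂ}
    (hP : Continuous P) (hy : Continuous y) : Continuous fun z => sh f (P z) (y z) := by
  have := hD.cont
  unfold sh
  fun_prop

/-- the path `sh p (c t)` -/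
noncomputable def shp (hD : Data A f) (p : S A f) (hy : ‖p.1.2‖ ≤ 1) (c : I → ℂ) (hc : Continuous c)
    (h1 : ∀ t, ‖c t‖ ≤ 1) (h0 : ∀ t, c t ≠ 0) (hp : c 0 = p.1.2) {q : S A f}
    (hq : sh f p (c 1) = q) : Path p q :=
  mkp (fun t => sh f p (c t)) (continuous_sh hD continuous_const hc)
    (fun t => sh_memS hD p.2 hy (h1 t) (h0 t)) (by simp [hp]) hq

/-- rotation function -/
noncomputable def ro (t : I) : ℂ := Complex.exp (2 * Real.pi * (t : ℝ) * Complex.I)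

lemma ro_cont : Continuous ro := by unfold ro; fun_prop
@[simp] lemma ro_zero : ro 0 = 1 := by simp [ro]
@[simp] lemma ro_one : ro 1 = 1 := by simp [ro, Complex.exp_two_pi_mul_I]
@[simp] lemma ro_norm (t : I) : ‖ro t‖ = 1 := by
  unfold ro
  rw [show (2 * Real.pi * (t : ℝ) * Complex.I : ℂ) = ((2 * Real.pi * (t : ℝ) : ℝ) : ℂ) * Complex.I by
    push_cast; ring]
  exact Complex.norm_exp_ofReal_mul_I _
lemma ro_ne (t : I) : ro t ≠ 0 := Complex.exp_ne_zero _

/-- the loop rotating `y` around `0` -/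
noncomputable def rot (hD : Data A f) (p : S A f) (hy : ‖p.1.2‖ ≤ 1) : Path p p :=
  shp hD p hy (fun t => ro t * p.1.2) (by have := ro_cont; fun_prop) (fun t => by simpa using hy)
    (fun t => mul_ne_zero (ro_ne t) p.2.2) (by simp) (by simp)

lemma rot_nat (hD : Data A f) {p q : S A f} (γ : Path p q) (h : ∀ t, ‖(γ t).1.2‖ ≤ 1)
    (hp : ‖p.1.2‖ ≤ 1) (hq : ‖q.1.2‖ ≤ 1) :
    cl γ ≫ cl (rot hD q hq) = cl (rot hD p hp) ≫ cl γ := by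
  have h1 := continuous_coe_path γ
  have := ro_cont
  refine squareT (fun z : I × I => sh f (γ z.1) (ro z.2 * (γ z.1).1.2))
    (continuous_sh hD (by fun_prop) (by fun_prop)) (fun z => ?_) _ _ _ _ ?_ ?_ ?_ ?_
  · exact sh_memS hD (γ z.1).2 (h _) (by simpa using h _) (mul_ne_zero (ro_ne _) (γ z.1).2.2)
  · intro t; simp
  · intro t; simp [rot, shp]
  · intro t; simp [rot, shp]
  · intro t; simp

/-- pushing a point with `Im y ≠ 0` keeping the real coordinates -/
noncomputable def pu (p : ℂ × ℂ) (y : ℂ) : ℂ × ℂ :=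
  (p.1 + ((p.1.im / p.2.im : ℝ) : ℂ) * (y - p.2), y)

@[simp] lemma pu_self (p : ℂ × ℂ) : pu p p.2 = p := by simp [pu]
@[simp] lemma pu_snd (p : ℂ × ℂ) (y : ℂ) : (pu p y).2 = y := rfl

lemma pu_mem {p : ℂ × ℂ} (hp : p ∈ S A f) (hy : p.2.im ≠ 0) {y : ℂ} (hy' : y.im ≠ 0) :
    pu p y ∈ S A f := by
  refine ⟨?_, fun h => hy' (by simp only [pu_snd] at h; simp [h])⟩
  intro a ha h
  simp only [pu] at h
  set m := p.1.im / p.2.im with hm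
  have him : p.1.im = m * p.2.im := by rw [hm]; field_simp
  have h2 := congrArg Complex.im h
  simp at h2
  have hma : m = f a := by
    have : (m - f a) * y.im = 0 := by linarith
    rcases mul_eq_zero.1 this with h | h
    · linarith
    · exact absurd h hy'
  apply hp.1 a ha
  rw [hma] at h
  linear_combination h

/-- interpolation of `y` towards `e i / 2` -/
noncomputable def yl (e : ℝ) (y : ℂ) (t : I) : ℂ := AffineMap.lineMap y ((e / 2 : ℝ) * Complex.I) (t : ℝ)

@[simp] lemma yl_zero (e : ℝ) (y : ℂ) : yl e y 0 = y := by simp [yl]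
@[simp] lemma yl_one (e : ℝ) (y : ℂ) : yl e y 1 = (e / 2 : ℝ) * Complex.I := by simp [yl]

lemma yl_im {e : ℝ} (hs : |e| = 1) {y : ℂ} (hy : 0 < e * y.im) (t : I) : 0 < e * (yl e y t).im := by
  have h2 : e * e = 1 := by rw [← abs_mul_abs_self, hs]; norm_num
  have hc : Convex ℝ {z : ℂ | 0 < e * z.im} := by
    have : {z : ℂ | 0 < e * z.im} = {z : ℂ | 0 < (e • Complex.imLm) z} := by ext; simp
    rw [this]
    exact convex_halfSpace_gt (LinearMap.isLinear _) _
  exact hc.lineMap_mem hy (by simp; nlinarith) t.2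

lemma yl_norm {e : ℝ} (hs : |e| = 1) {y : ℂ} (hy : ‖y‖ ≤ 1) (t : I) : ‖yl e y t‖ ≤ 1 := by
  have hc := convex_closedBall (0 : ℂ) 1
  have := hc.lineMap_mem (x := y) (y := (e / 2 : ℝ) * Complex.I) (by simpa using hy)
    (by simp [hs]; norm_num) t.2
  simpa [yl] using this

lemma im_ne {e r : ℝ} (h : 0 < e * r) : r ≠ 0 := by rintro rfl; simp at h

lemma yl_cont (e : ℝ) {Z : Type*} [TopologicalSpace Z] {y : Z → ℂ} {t : Z → I} (hy : Continuous y)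
    (ht : Continuous t) : Continuous fun z => yl e (y z) (t z) := by
  unfold yl
  simp only [AffineMap.lineMap_apply_module]; fun_prop

lemma pu_cont {Z : Type*} [TopologicalSpace Z] {P : Z → ℂ × ℂ} {y : Z → ℂ}
    (hP : Continuous P) (hy : Continuous y) (h0 : ∀ z, (P z).2.im ≠ 0) :
    Continuous fun z => pu (P z) (y z) := by
  unfold pu
  have h1 : Continuous fun z => (P z).1.im / (P z).2.im :=
    Continuous.div (by fun_prop) (by fun_prop) h0
  fun_prop

noncomputable def pt (e : ℝ) (hs : |e| = 1) (p : S A f) (h : 0 < e * p.1.2.im) : S A f :=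
  ⟨pu p (yl e p.1.2 1), pu_mem p.2 (im_ne h) (im_ne (yl_im hs h 1))⟩

lemma pt_norm (e : ℝ) (hs : |e| = 1) (p : S A f) (h : 0 < e * p.1.2.im) :
    ‖(pt e hs p h).1.2‖ ≤ 1 := by
  simp [pt, hs]; norm_num

noncomputable def push (e : ℝ) (hs : |e| = 1) (p : S A f) (h : 0 < e * p.1.2.im) :
    Path p (pt e hs p h) :=
  mkp (fun t => pu p (yl e p.1.2 t))
    (pu_cont continuous_const (yl_cont e continuous_const continuous_id) (fun _ => im_ne h))
    (fun t => pu_mem p.2 (im_ne h) (im_ne (yl_im hs h t))) (by simp) rfl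

@[simp] lemma push_coe (e : ℝ) (hs : |e| = 1) (p : S A f) (h : 0 < e * p.1.2.im) (t : I) :
    (push e hs p h t).1 = pu p (yl e p.1.2 t) := rfl

/-- the central loop in the half spaces -/
noncomputable def tau (hD : Data A f) (e : ℝ) (hs : |e| = 1) (p : S A f) (h : 0 < e * p.1.2.im) :
    FundamentalGroupoid.mk p ⟶ FundamentalGroupoid.mk p :=
  cl (push e hs p h) ≫ cl (rot hD (pt e hs p h) (pt_norm e hs p h)) ≫ inv (cl (push e hs p h))

lemma tau_nat (hD : Data A f) (e : ℝ) (hs : |e| = 1) {p q : S A f} (γ : Path p q)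
    (h : ∀ t, 0 < e * (γ t).1.2.im) (hp : 0 < e * p.1.2.im) (hq : 0 < e * q.1.2.im) :
    cl γ ≫ tau hD e hs q hq = tau hD e hs p hp ≫ cl γ := by
  have h1 := continuous_coe_path γ
  let γ' : Path (pt e hs p hp) (pt e hs q hq) :=
    mkp (fun t => pu (γ t) (yl e (γ t).1.2 1))
      (pu_cont h1 (yl_cont e (by fun_prop) continuous_const) (fun t => im_ne (h t)))
      (fun t => pu_mem (γ t).2 (im_ne (h t)) (im_ne (yl_im hs (h t) 1))) (by simp [pt]) (by simp [pt])
  have sq : cl γ ≫ cl (push e hs q hq) = cl (push e hs p hp) ≫ cl γ' := by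
    refine squareT (fun z : I × I => pu (γ z.1) (yl e (γ z.1).1.2 z.2))
      (pu_cont (by fun_prop) (yl_cont e (by fun_prop) (by fun_prop)) (fun t => im_ne (h _)))
      (fun z => pu_mem (γ _).2 (im_ne (h _)) (im_ne (yl_im hs (h _) _))) _ _ _ _ ?_ ?_ ?_ ?_
    · intro t; simp
    · intro t; simp
    · intro t; simp
    · intro t; simp [γ']
  have rn := rot_nat hD γ' (fun t => by simp [γ', hs]; norm_num) (pt_norm e hs p hp)
    (pt_norm e hs q hq)
  have sq' : inv (cl (push e hs p hp)) ≫ cl γ = cl γ' ≫ inv (cl (push e hs q hq)) := by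
    rw [IsIso.inv_comp_eq, ← Category.assoc, ← sq, Category.assoc, IsIso.hom_inv_id,
      Category.comp_id]
  unfold tau
  simp only [Category.assoc]
  rw [sq', ← Category.assoc, sq, Category.assoc, ← Category.assoc (cl γ'), rn]
  simp only [Category.assoc]

lemma tau_rot (hD : Data A f) (e : ℝ) (hs : |e| = 1) (p : S A f)
    (hp : 0 < e * p.1.2.im) (h : ‖p.1.2‖ ≤ 1) : tau hD e hs p hp = cl (rot hD p h) := by
  unfold tau
  rw [← Category.assoc, rot_nat hD (push e hs p hp) (fun t => by simpa using yl_norm hs h t) h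
    (pt_norm e hs p hp)]
  simp

end SL

namespace SL
open CategoryTheory unitInterval


variable {A : Finset ℝ} {f : ℂ → ℝ}

lemma natc {C : Type*} [Category C] {a b c : C} {g : a ⟶ b} {h : b ⟶ c} {α : a ⟶ a} {β : b ⟶ b}
    {γ : c ⟶ c} (h1 : g ≫ β = α ≫ g) (h2 : h ≫ γ = β ≫ h) : (g ≫ h) ≫ γ = α ≫ g ≫ h := by
  rw [Category.assoc, h2, ← Category.assoc, h1, Category.assoc]

/-- convex cells joining the two half spaces -/
def OO (k m : ℝ) : Set (ℂ × ℂ) := {p | 0 < k * p.2.re ∧ |p.2.im| < m * p.1.im}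

/-- half spaces -/
def WW (e : ℝ) : Set (ℂ × ℂ) := {p | 0 < e * p.2.im}

lemma convex_lin (l : (ℂ × ℂ) →ₗ[ℝ] ℝ) : Convex ℝ {p : ℂ × ℂ | 0 < l p} :=
  convex_halfSpace_gt (LinearMap.isLinear _) _

lemma convex_WW (e : ℝ) : Convex ℝ (WW e) := by
  convert convex_lin (e • (Complex.imLm ∘ₗ LinearMap.snd ℝ ℂ ℂ)) using 1
  ext p; simp [WW]

lemma convex_re (e : ℝ) : Convex ℝ {p : ℂ × ℂ | 0 < e * p.2.re} := by
  convert convex_lin (e • (Complex.reLm ∘ₗ LinearMap.snd ℝ ℂ ℂ)) using 1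
  ext p; simp

lemma convex_OO (k m : ℝ) : Convex ℝ (OO k m) := by
  have h1 := convex_re k
  have h2 := convex_lin (m • (Complex.imLm ∘ₗ LinearMap.fst ℝ ℂ ℂ) - (Complex.imLm ∘ₗ LinearMap.snd ℝ ℂ ℂ))
  have h3 := convex_lin (m • (Complex.imLm ∘ₗ LinearMap.fst ℝ ℂ ℂ) + (Complex.imLm ∘ₗ LinearMap.snd ℝ ℂ ℂ))
  convert h1.inter (h2.inter h3) using 1
  ext p
  simp only [OO, Set.mem_ofPred_eq, Set.mem_inter_iff, abs_lt]
  simp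
  intro _
  constructor
  · rintro ⟨a, b⟩; constructor <;> linarith
  · rintro ⟨a, b⟩; constructor <;> linarith

lemma isOpen_WW (e : ℝ) : IsOpen (WW e) := isOpen_lt (by fun_prop) (by fun_prop)

lemma pm {e : ℝ} (h : |e| = 1) : e = 1 ∨ e = -1 := eq_or_eq_neg_of_abs_eq h

lemma OO_sub (hD : Data A f) {k m : ℝ} (hm : |m| = 1) : OO k m ⊆ S A f := by
  rintro p ⟨h1, h2⟩
  refine ⟨fun a ha h => ?_, fun h => by simp [h] at h1⟩
  have h3 := congrArg Complex.im h
  simp at h3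
  rw [h3] at h2
  have h4 := le_abs_self (m * (f a * p.2.im))
  rw [abs_mul, hm, abs_mul] at h4
  have h5 := hD.bd a
  nlinarith [abs_nonneg p.2.im]

lemma agree (hD : Data A f) {k m : ℝ} (hk : |k| = 1) (hm : |m| = 1) {z w : S A f} (hz : z.1 ∈ OO k m)
    (hw : w.1 ∈ OO k m) (hz1 : 0 < (1:ℝ) * z.1.2.im) (hw1 : 0 < (-1:ℝ) * w.1.2.im)
    (γ : Path z w) (hγ : ∀ t, (γ t).1 ∈ OO k m) :
    cl γ ≫ tau hD (-1) (by simp) w hw1 = tau hD 1 (by simp) z hz1 ≫ cl γ := by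
  have hO := convex_OO k m
  have hOS := OO_sub hD (k := k) hm
  have hk2 : k * k = 1 := by rw [← abs_mul_abs_self, hk]; norm_num
  have hm2 : m * m = 1 := by rw [← abs_mul_abs_self, hm]; norm_num
  have key : ∀ e : ℝ, |e| = 1 → ∃ u : S A f, u.1 ∈ OO k m ∧ 0 < e * u.1.2.im ∧ ‖u.1.2‖ ≤ 1 := by
    intro e he
    have he2 : e * e = 1 := by rw [← abs_mul_abs_self, he]; norm_num
    have hu : ((⟨0, 3 * m⟩, ⟨k / 2, e / 2⟩) : ℂ × ℂ) ∈ OO k m := by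
      refine ⟨by simp only; nlinarith, ?_⟩
      simp only
      rw [abs_div, he]
      norm_num
      nlinarith
    refine ⟨⟨_, hOS hu⟩, hu, by simp only; nlinarith, ?_⟩
    simp only
    rw [Complex.norm_def, Complex.normSq_mk, Real.sqrt_le_one]
    nlinarith
  obtain ⟨u, hu, hu1, hun⟩ := key 1 (by simp)
  obtain ⟨v, hv, hv1, hvn⟩ := key (-1) (by simp)
  let C1 := OO k m ∩ WW 1
  let C2 := OO k m ∩ WW (-1)
  have hB : Convex ℝ {p : ℂ × ℂ | ‖p.2‖ ≤ 1} := by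
    have := (convex_closedBall (0 : ℂ) 1).linear_preimage (LinearMap.snd ℝ ℂ ℂ)
    have e : {p : ℂ × ℂ | ‖p.2‖ ≤ 1} = LinearMap.snd ℝ ℂ ℂ ⁻¹' Metric.closedBall 0 1 := by
      ext p; simp
    rw [e]
    exact this
  let C3 := OO k m ∩ {p : ℂ × ℂ | ‖p.2‖ ≤ 1}
  let s1 := seg C1 (hO.inter (convex_WW _)) (Set.inter_subset_left.trans hOS) z u ⟨hz, hz1⟩ ⟨hu, hu1⟩
  let s2 := seg C3 (hO.inter hB) (Set.inter_subset_left.trans hOS) u v ⟨hu, hun⟩ ⟨hv, hvn⟩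
  let s3 := seg C2 (hO.inter (convex_WW _)) (Set.inter_subset_left.trans hOS) v w ⟨hv, hv1⟩ ⟨hw, hw1⟩
  let s := seg (OO k m) hO hOS u w hu hw
  have m1 : ∀ t, (s1 t).1 ∈ C1 := seg_mem _ _ _ _ _ _ _
  have m2 : ∀ t, (s2 t).1 ∈ C3 := seg_mem _ _ _ _ _ _ _
  have m3 : ∀ t, (s3 t).1 ∈ C2 := seg_mem _ _ _ _ _ _ _
  have m4 : ∀ t, (s t).1 ∈ OO k m := seg_mem _ _ _ _ _ _ _
  have e1 : cl s1 ≫ cl s = cl γ := convex_comp _ hO hOS _ _ _ (fun t => (m1 t).1) m4 hγ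
  have e2 : cl s2 ≫ cl s3 = cl s :=
    convex_comp _ hO hOS _ _ _ (fun t => (m2 t).1) (fun t => (m3 t).1) m4
  have n1 := tau_nat hD 1 (by simp) s1 (fun t => (m1 t).2) hz1 hu1
  have n2 := rot_nat hD s2 (fun t => (m2 t).2) hun hvn
  have n3 := tau_nat hD (-1) (by simp) s3 (fun t => (m3 t).2) hv1 hw1
  rw [tau_rot hD _ _ _ _ hun] at n1
  rw [tau_rot hD _ _ _ _ hvn] at n3
  rw [← e1, ← e2]
  exact natc n1 (natc n2 n3)

/-- local system compatibility -/
def Good (hD : Data A f) (p : S A f) (α : FundamentalGroupoid.mk p ⟶ FundamentalGroupoid.mk p)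
    (r : ℝ) : Prop :=
  0 < r ∧ Metric.ball p.1 r ⊆ S A f ∧ ∀ (q : S A f) (e : ℝ) (hs : |e| = 1) (h : 0 < e * q.1.2.im)
    (γ : Path p q), (∀ t, (γ t).1 ∈ Metric.ball p.1 r) → cl γ ≫ tau hD e hs q h = α ≫ cl γ

lemma exists_good (hD : Data A f) (p : S A f) : ∃ α r, Good hD p α r := by
  by_cases him : p.1.2.im = 0
  · have hre : p.1.2.re ≠ 0 := fun h => p.2.2 (Complex.ext h him)
    obtain ⟨k, hk, hkp⟩ : ∃ k : ℝ, |k| = 1 ∧ 0 < k * p.1.2.re := by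
      rcases lt_or_gt_of_ne hre with h | h
      · exact ⟨-1, by simp, by linarith⟩
      · exact ⟨1, by simp, by linarith⟩
    obtain ⟨m, hm, hmp⟩ : ∃ m : ℝ, |m| = 1 ∧ 0 ≤ m * p.1.1.im := by
      rcases le_or_gt 0 p.1.1.im with h | h
      · exact ⟨1, by simp, by linarith⟩
      · exact ⟨-1, by simp, by linarith⟩
    have hm2 : m * m = 1 := by rw [← abs_mul_abs_self, hm]; norm_num
    obtain ⟨r, hr, hrS⟩ := Metric.isOpen_iff.1
      ((isOpen_S (A := A) (f := f)).inter (isOpen_lt (f := fun _ : ℂ × ℂ => (0:ℝ))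
        (g := fun p : ℂ × ℂ => k * p.2.re) (by fun_prop) (by fun_prop))) p.1 ⟨p.2, hkp⟩
    have hBS : Metric.ball p.1 r ⊆ S A f := fun q hq => (hrS hq).1
    have hB := convex_ball p.1 r
    have hpB : p.1 ∈ Metric.ball p.1 r := Metric.mem_ball_self hr
    have key : ∀ e : ℝ, |e| = 1 → ∃ z : S A f, z.1 ∈ OO k m ∧ 0 < e * z.1.2.im ∧
        z.1 ∈ Metric.ball p.1 r := by
      intro e he
      have he2 : e * e = 1 := by rw [← abs_mul_abs_self, he]; norm_num
      let z : ℂ × ℂ := (p.1.1 + ((m * (r / 2) : ℝ) : ℂ) * Complex.I,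
        p.1.2 + ((e * (r / 4) : ℝ) : ℂ) * Complex.I)
      have hz : z ∈ Metric.ball p.1 r := by
        rw [Metric.mem_ball, Prod.dist_eq, dist_eq_norm, dist_eq_norm]
        simp only [z, add_sub_cancel_left, norm_mul, Complex.norm_real, Complex.norm_I, mul_one,
          Real.norm_eq_abs, hm, he, one_mul]
        rw [abs_of_pos (by positivity), abs_of_pos (by positivity)]
        exact max_lt (by linarith) (by linarith)
      refine ⟨⟨z, hBS hz⟩, ⟨(hrS hz).2, ?_⟩, ?_, hz⟩
      · simp [z, him, abs_mul, he]
        rw [abs_of_pos (by positivity)]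
        nlinarith
      · simp [z, him]
        nlinarith
    obtain ⟨u, hu, hu1, huB⟩ := key 1 (by simp)
    obtain ⟨v, hv, hv1, hvB⟩ := key (-1) (by simp)
    let s := seg _ hB hBS p u hpB huB
    have ms : ∀ t, (s t).1 ∈ Metric.ball p.1 r := seg_mem _ _ _ _ _ _ _
    refine ⟨cl s ≫ tau hD 1 (by simp) u hu1 ≫ inv (cl s), r, hr, hBS, ?_⟩
    have n0 : cl s ≫ tau hD 1 (by simp) u hu1 =
      (cl s ≫ tau hD 1 (by simp) u hu1 ≫ inv (cl s)) ≫ cl s := by simp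
    intro q e hs h γ hγ
    have hqB : q.1 ∈ Metric.ball p.1 r := by simpa using hγ 1
    rcases pm hs with rfl | rfl
    · let s1 := seg (Metric.ball p.1 r ∩ WW 1) (hB.inter (convex_WW _))
        (Set.inter_subset_left.trans hBS) u q ⟨huB, hu1⟩ ⟨hqB, h⟩
      have m1 : ∀ t, (s1 t).1 ∈ Metric.ball p.1 r ∩ WW 1 := seg_mem _ _ _ _ _ _ _
      rw [← convex_comp _ hB hBS s s1 γ ms (fun t => (m1 t).1) hγ]
      exact natc n0 (tau_nat hD 1 (by simp) s1 (fun t => (m1 t).2) hu1 h)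
    · let s1 := seg (Metric.ball p.1 r ∩ OO k m) (hB.inter (convex_OO _ _))
        (Set.inter_subset_left.trans hBS) u v ⟨huB, hu⟩ ⟨hvB, hv⟩
      have m1 : ∀ t, (s1 t).1 ∈ Metric.ball p.1 r ∩ OO k m := seg_mem _ _ _ _ _ _ _
      let s2 := seg (Metric.ball p.1 r ∩ WW (-1)) (hB.inter (convex_WW _))
        (Set.inter_subset_left.trans hBS) v q ⟨hvB, hv1⟩ ⟨hqB, h⟩
      have m2 : ∀ t, (s2 t).1 ∈ Metric.ball p.1 r ∩ WW (-1) := seg_mem _ _ _ _ _ _ _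
      let s3 := seg _ hB hBS u q huB hqB
      have m3 : ∀ t, (s3 t).1 ∈ Metric.ball p.1 r := seg_mem _ _ _ _ _ _ _
      rw [← convex_comp _ hB hBS s s3 γ ms m3 hγ,
        ← convex_comp _ hB hBS s1 s2 s3 (fun t => (m1 t).1) (fun t => (m2 t).1) m3]
      exact natc n0 (natc (agree hD hk hm hu hv hu1 hv1 s1 (fun t => (m1 t).2))
        (tau_nat hD (-1) (by simp) s2 (fun t => (m2 t).2) hv1 h))
  · obtain ⟨d, hd, hdp⟩ : ∃ k : ℝ, |k| = 1 ∧ 0 < k * p.1.2.im := by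
      rcases lt_or_gt_of_ne him with h | h
      · exact ⟨-1, by simp, by linarith⟩
      · exact ⟨1, by simp, by linarith⟩
    obtain ⟨r, hr, hrS⟩ := Metric.isOpen_iff.1
      ((isOpen_S (A := A) (f := f)).inter (isOpen_WW d)) p.1 ⟨p.2, hdp⟩
    refine ⟨tau hD d hd p hdp, r, hr, fun q hq => (hrS hq).1, ?_⟩
    intro q e hs h γ hγ
    have h2 : 0 < d * q.1.2.im := by simpa [WW] using (hrS (hγ 1)).2
    have : e = d := by
      rcases pm hs with rfl | rfl <;> rcases pm hd with rfl | rfl <;> first | rfl | linarith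
    subst this
    exact tau_nat hD e hs γ (fun t => (hrS (hγ t)).2) hdp h

lemma near (p : ℂ × ℂ) (O : Set (ℂ × ℂ)) (hO : IsOpen O) (hp : p ∈ O) :
    ∃ z ∈ O, ∃ e : ℝ, |e| = 1 ∧ 0 < e * z.2.im := by
  obtain ⟨r, hr, h⟩ := Metric.isOpen_iff.1 hO p hp
  obtain ⟨d, hd, hdp⟩ : ∃ k : ℝ, |k| = 1 ∧ 0 ≤ k * p.2.im := by
    rcases le_total p.2.im 0 with h | h
    · exact ⟨-1, by simp, by linarith⟩
    · exact ⟨1, by simp, by linarith⟩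
  have hd2 : d * d = 1 := by rw [← abs_mul_abs_self, hd]; norm_num
  refine ⟨(p.1, p.2 + ((d * (r / 2) : ℝ) : ℂ) * Complex.I), h ?_, d, hd, ?_⟩
  · rw [Metric.mem_ball, Prod.dist_eq, dist_eq_norm, dist_eq_norm]
    simp only [add_sub_cancel_left, norm_mul, Complex.norm_real, Complex.norm_I, mul_one,
          Real.norm_eq_abs, hd, one_mul, sub_self, norm_zero]
    rw [abs_of_pos (by positivity)]
    exact max_lt hr (by linarith)
  · simp; nlinarith

theorem central (hD : Data A f) : ∃ τ : ∀ p : S A f, (FundamentalGroupoid.mk p ⟶ FundamentalGroupoid.mk p),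
    (∀ {p q : S A f} (g : FundamentalGroupoid.mk p ⟶ FundamentalGroupoid.mk q),
      g ≫ τ q = τ p ≫ g) ∧
    ∀ (p : S A f) (h : ‖p.1.2‖ < 1), τ p = cl (rot hD p h.le) := by
  choose τ r hg using exists_good hD
  have hO : ∀ p, IsOpen (Metric.ball p.1 (r p)) := fun p => Metric.isOpen_ball
  have hC : ∀ p : S A f, Convex ℝ (Metric.ball p.1 (r p)) := fun p => convex_ball _ _
  have hpp : ∀ p : S A f, p.1 ∈ (Metric.ball p.1 (r p)) := fun p => Metric.mem_ball_self (hg p).1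
  refine ⟨τ, ?_, ?_⟩
  · have key : ∀ (i p : S A f) (hp : p.1 ∈ Metric.ball i.1 (r i)) (γ : Path i p),
        (∀ t, (γ t).1 ∈ Metric.ball i.1 (r i)) → cl γ ≫ τ p = τ i ≫ cl γ := by
      intro i p hp γ hγ
      obtain ⟨z, ⟨hz1, hz2⟩, e, he, hez⟩ := near p.1 _ ((hO i).inter (hO p)) ⟨hp, hpp p⟩
      let z' : S A f := ⟨z, (hg i).2.1 hz1⟩
      let s := seg (_ ∩ _) ((hC i).inter (hC p)) (Set.inter_subset_left.trans (hg i).2.1) p z'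
        ⟨hp, hpp p⟩ ⟨hz1, hz2⟩
      have ms : ∀ t, (s t).1 ∈ (_ ∩ _) := seg_mem _ _ _ _ _ _ _
      let s1 := seg _ (hC i) (hg i).2.1 i z' (hpp i) hz1
      have m1 : ∀ t, (s1 t).1 ∈ _ := seg_mem _ _ _ _ _ _ _
      have n1 := (hg p).2.2 z' e he hez s (fun t => (ms t).2)
      have n2 := (hg i).2.2 z' e he hez s1 m1
      rw [← convex_comp _ (hC i) (hg i).2.1 γ s s1 hγ (fun t => (ms t).1) m1, Category.assoc, n1,
        ← Category.assoc, ← Category.assoc] at n2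
      exact (cancel_mono _).1 n2
    intro p q g
    refine gen (fun i : S A f => {q : S A f | q.1 ∈ Metric.ball i.1 (r i)})
      (fun i => (hO i).preimage continuous_subtype_val) (fun x => ⟨x, hpp x⟩)
      (fun {p q} g => g ≫ τ q = τ p ≫ g) (fun g h => natc) ?_ g
    intro p q γ i hγ
    have hp : p.1 ∈ Metric.ball i.1 (r i) := by simpa using hγ 0
    have hq : q.1 ∈ Metric.ball i.1 (r i) := by simpa using hγ 1
    let s1 := seg _ (hC i) (hg i).2.1 i p (hpp i) hp
    have m1 : ∀ t, (s1 t).1 ∈ _ := seg_mem _ _ _ _ _ _ _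
    let s2 := seg _ (hC i) (hg i).2.1 i q (hpp i) hq
    have m2 : ∀ t, (s2 t).1 ∈ _ := seg_mem _ _ _ _ _ _ _
    have n1 := key i p hp s1 m1
    have n2 := key i q hq s2 m2
    rw [← convex_comp _ (hC i) (hg i).2.1 s1 γ s2 m1 hγ m2] at n2
    rw [Category.assoc, ← Category.assoc (τ i), ← n1, Category.assoc] at n2
    exact (cancel_epi _).1 n2
  · intro p h
    have hB : IsOpen {p : ℂ × ℂ | ‖p.2‖ < 1} := isOpen_lt (by fun_prop) (by fun_prop)
    have hBc : Convex ℝ {p : ℂ × ℂ | ‖p.2‖ < 1} := by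
      have := (convex_ball (0 : ℂ) 1).linear_preimage (LinearMap.snd ℝ ℂ ℂ)
      have e : {p : ℂ × ℂ | ‖p.2‖ < 1} = LinearMap.snd ℝ ℂ ℂ ⁻¹' Metric.ball 0 1 := by
        ext p; simp
      rw [e]
      exact this
    obtain ⟨z, ⟨hz1, hz2⟩, e, he, hez⟩ := near p.1 _ ((hO p).inter hB) ⟨hpp p, h⟩
    let z' : S A f := ⟨z, (hg p).2.1 hz1⟩
    let s := seg (_ ∩ _) ((hC p).inter hBc) (Set.inter_subset_left.trans (hg p).2.1) p z'
        ⟨hpp p, h⟩ ⟨hz1, hz2⟩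
    have ms : ∀ t, (s t).1 ∈ (_ ∩ _) := seg_mem _ _ _ _ _ _ _
    have n1 := (hg p).2.2 z' e he hez s (fun t => (ms t).1)
    have n2 := rot_nat hD s (fun t => (ms t).2.le) h.le hz2.le
    rw [tau_rot hD e he z' hez hz2.le, n2] at n1
    exact ((cancel_mono _).1 n1).symm

end SL

namespace SL
open CategoryTheory unitInterval


variable {A : Finset ℝ} {f : ℂ → ℝ}

lemma high_mem (hD : Data A f) {y : ℂ} (hy : y ≠ 0) :
    (((‖y‖ + 1 : ℝ) : ℂ) * Complex.I, y) ∈ S A f := by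
  refine ⟨fun a ha h => ?_, hy⟩
  have h3 := congrArg Complex.im h
  simp at h3
  have h4 := le_abs_self (f a * y.im)
  rw [abs_mul] at h4
  have h5 := hD.bd a
  have h6 := Complex.abs_im_le_norm y
  nlinarith [abs_nonneg y.im, norm_nonneg y]

lemma joined_high (hD : Data A f) (p : S A f) : Joined p ⟨_, high_mem hD p.2.2⟩ := by
  let F : Set ℂ := ((A.image fun a : ℝ => (a : ℂ) + (f (a : ℂ) : ℂ) * p.1.2 : Finset ℂ) : Set ℂ)
  have hF : IsPathConnected Fᶜ := (Finset.countable_toSet _).isPathConnected_compl_of_one_lt_rank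
    (by rw [Complex.rank_real_complex]; norm_num)
  have hmem : ∀ x ∈ Fᶜ, (x, p.1.2) ∈ S A f := by
    intro x hx
    refine ⟨fun a ha h => hx ?_, p.2.2⟩
    simp only [F, Finset.coe_image]
    exact ⟨a, ha, h.symm⟩
  have hmem' : ∀ x, (x, p.1.2) ∈ S A f → x ∈ Fᶜ := by
    intro x hx hxF
    simp only [F, Finset.coe_image] at hxF
    obtain ⟨a, ha, h⟩ := hxF
    exact hx.1 a ha h.symm
  obtain ⟨γ, hγ⟩ := hF.joinedIn p.1.1 (hmem' _ p.2) _ (hmem' _ (high_mem hD p.2.2))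
  have := γ.continuous
  exact ⟨mkp (fun t => (γ t, p.1.2)) (by fun_prop) (fun t => hmem _ (hγ t)) (by simp) (by simp)⟩

lemma joined_high2 (hD : Data A f) {y z : ℂ} (hy : y ≠ 0) (hz : z ≠ 0) :
    Joined (⟨_, high_mem hD hy⟩ : S A f) ⟨_, high_mem hD hz⟩ := by
  have hF : IsPathConnected ({0}ᶜ : Set ℂ) := isPathConnected_compl_singleton_of_one_lt_rank
    (by rw [Complex.rank_real_complex]; norm_num) _
  obtain ⟨γ, hγ⟩ := hF.joinedIn y hy z hz
  have := γ.continuous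
  exact ⟨mkp (fun t => (((‖γ t‖ + 1 : ℝ) : ℂ) * Complex.I, γ t)) (by fun_prop)
    (fun t => high_mem hD (hγ t)) (by simp) (by simp)⟩

lemma joinedS (hD : Data A f) (p q : S A f) : Joined p q :=
  (joined_high hD p).trans ((joined_high2 hD p.2.2 q.2.2).trans (joined_high hD q).symm)

/-- second coordinate -/
def Ymap : C(S A f, {z : ℂ // z ≠ 0}) := ⟨fun p => ⟨p.1.2, p.2.2⟩, by fun_prop⟩

theorem exists_w (hD : Data A f) (p : S A f) (h : ‖p.1.2‖ ≤ 1) :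
    ∃ w : FundamentalGroup (S A f) p →* Multiplicative ℤ,
      w (cl (rot hD p h) : FundamentalGroupoid.mk p ⟶ FundamentalGroupoid.mk p) = Multiplicative.ofAdd 1 := by
  let hp := Complex.isAddQuotientCoveringMap_exp
  let ζ := Complex.log p.1.2
  have hζ : Complex.exp ζ = p.1.2 := Complex.exp_log p.2.2
  let e : (fun z : ℂ ↦ (⟨_, z.exp_ne_zero⟩ : {z : ℂ // z ≠ 0})) ⁻¹' {Ymap p} :=
    ⟨ζ, Subtype.ext hζ⟩
  let g0 : AddSubgroup.zmultiples (2 * Real.pi * Complex.I) :=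
    ⟨2 * Real.pi * Complex.I, AddSubgroup.mem_zmultiples _⟩
  let g : (Multiplicative (AddSubgroup.zmultiples (2 * Real.pi * Complex.I)))ᵐᵒᵖ :=
    MulOpposite.op (Multiplicative.ofAdd g0)
  let ψ := zpowersHom (Multiplicative (AddSubgroup.zmultiples (2 * Real.pi * Complex.I)))ᵐᵒᵖ g
  have hval : ∀ n : Multiplicative ℤ,
      ((Multiplicative.toAdd (MulOpposite.unop (ψ n))).1 : ℂ) = n.toAdd • (2 * Real.pi * Complex.I) := by
    intro n
    simp [ψ, g, g0]
  have hψ : Function.Bijective ψ := by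
    constructor
    · intro m n hmn
      have := hval m
      rw [hmn, hval n] at this
      simp [Complex.I_ne_zero, Real.pi_ne_zero] at this
      exact this.symm
    · intro x
      obtain ⟨n, hn⟩ := AddSubgroup.mem_zmultiples_iff.1 (Multiplicative.toAdd (MulOpposite.unop x)).2
      refine ⟨Multiplicative.ofAdd n, ?_⟩
      apply MulOpposite.unop_injective
      apply Multiplicative.toAdd.injective
      apply Subtype.ext
      rw [hval, ← hn]
      rfl
  let h1 := hp.fundamentalGroupToMulOpposite e
  let ψ' := MulEquiv.ofBijective ψ hψ
  refine ⟨(ψ'.symm.toMonoidHom.comp h1).comp (FundamentalGroup.map Ymap p), ?_⟩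
  have : h1 (FundamentalGroup.map Ymap p
      (cl (rot hD p h) : FundamentalGroupoid.mk p ⟶ FundamentalGroupoid.mk p)) = g := by
    rw [hp.fundamentalGroupToMulOpposite_apply_eq_Iff]
    let Γ : C(I, ℂ) := ⟨fun t => ζ + 2 * Real.pi * (t : ℝ) * Complex.I, by fun_prop⟩
    have hΓ := (hp.isCoveringMap.eq_liftPath_iff' (γ := ((rot hD p h).map Ymap.continuous : C(I, _)))
      (e := ζ) (Subtype.ext (by simp [Ymap, hζ])) (Γ := Γ)).2 ⟨by
        ext t
        simp [Γ, Complex.exp_add, hζ, Ymap, rot, shp, ro, mul_comm]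
        rfl, by simp [Γ]⟩
    have e1 : (hp.isCoveringMap.monodromy (FundamentalGroup.map Ymap p
      (cl (rot hD p h) : FundamentalGroupoid.mk p ⟶ FundamentalGroupoid.mk p)) e).1 = Γ 1 := by
      rw [hΓ]; rfl
    rw [e1]
    simp only [Γ, g, g0, e]
    simp [add_comm]
  simp only [MonoidHom.comp_apply]
  rw [this]
  change ψ'.symm g = _
  rw [MulEquiv.symm_apply_eq]
  simp [ψ', ψ]

end SL

namespace SL
open CategoryTheory unitInterval


variable {A : Finset ℝ} {f : ℂ → ℝ}

/-- the inclusion -/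
noncomputable def inc : C(S A f, S' A f) := ⟨fun p => ⟨p.1, p.2.1⟩, by fun_prop⟩

@[simp] lemma inc_coe (p : S A f) : (inc p).1 = p.1 := rfl

/-- inclusion on path classes -/
noncomputable def Jm {a b : S A f} (g : FundamentalGroupoid.mk a ⟶ FundamentalGroupoid.mk b) :
    FundamentalGroupoid.mk (inc a) ⟶ FundamentalGroupoid.mk (inc b) :=
  (FundamentalGroupoid.map inc).map g

lemma Jm_comp {a b c : S A f} (g : FundamentalGroupoid.mk a ⟶ FundamentalGroupoid.mk b)
    (h : FundamentalGroupoid.mk b ⟶ FundamentalGroupoid.mk c) : Jm (g ≫ h) = Jm g ≫ Jm h :=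
  (FundamentalGroupoid.map inc).map_comp g h

lemma Jm_id (a : S A f) : Jm (𝟙 (FundamentalGroupoid.mk a)) = 𝟙 _ :=
  (FundamentalGroupoid.map inc).map_id _

lemma Jm_inv {a b : S A f} (g : FundamentalGroupoid.mk a ⟶ FundamentalGroupoid.mk b) :
    Jm (inv g) = inv (Jm g) := by
  apply IsIso.eq_inv_of_hom_inv_id
  rw [← Jm_comp, IsIso.hom_inv_id, Jm_id]

lemma Jm_cl {a b : S A f} (γ : Path a b) (γ' : Path (inc a) (inc b)) (h : ∀ t, (γ' t).1 = (γ t).1) :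
    Jm (cl γ) = cl γ' := by
  have : γ' = γ.map inc.continuous := by
    ext1; funext t; exact Subtype.ext (h t)
  rw [this]; rfl

/-- lift of a point -/
def up (p : S' A f) (h : p.1.2 ≠ 0) : S A f := ⟨p.1, p.2, h⟩

/-- shear path in the larger space -/
noncomputable def shq (hD : Data A f) (p : S' A f) (hy : ‖p.1.2‖ ≤ 1) (c : I → ℂ) (hc : Continuous c)
    (h1 : ∀ t, ‖c t‖ ≤ 1) (hp : c 0 = p.1.2) {q : S' A f}
    (hq : sh f p (c 1) = q) : Path p q :=
  mkp (fun t => sh f p (c t)) (continuous_sh hD continuous_const hc)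
    (fun t => sh_mem hD p.2 hy (h1 t)) (by simp [hp]) hq

@[simp] lemma shq_coe (hD : Data A f) (p : S' A f) (hy : ‖p.1.2‖ ≤ 1) (c : I → ℂ) (hc : Continuous c)
    (h1 : ∀ t, ‖c t‖ ≤ 1) (hp : c 0 = p.1.2) {q : S' A f}
    (hq : sh f p (c 1) = q) (t : I) : (shq hD p hy c hc h1 hp hq t).1 = sh f p (c t) := rfl

@[simp] lemma shp_coe (hD : Data A f) (p : S A f) (hy : ‖p.1.2‖ ≤ 1) (c : I → ℂ) (hc : Continuous c)
    (h1 : ∀ t, ‖c t‖ ≤ 1) (h0 : ∀ t, c t ≠ 0) (hp : c 0 = p.1.2) {q : S A f}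
    (hq : sh f p (c 1) = q) (t : I) : (shp hD p hy c hc h1 h0 hp hq t).1 = sh f p (c t) := rfl

lemma shq_eq (hD : Data A f) (p : S' A f) (hy : ‖p.1.2‖ ≤ 1) (c : I → ℂ) (hc : Continuous c)
    (h1 : ∀ t, ‖c t‖ ≤ 1) (hp : c 0 = p.1.2) {q : S' A f}
    (hq : sh f p (c 1) = q) (d : I → ℂ) (hd : Continuous d)
    (h1' : ∀ t, ‖d t‖ ≤ 1) (hp' : d 0 = p.1.2)
    (hq' : sh f p (d 1) = q) :
    cl (shq hD p hy c hc h1 hp hq) = cl (shq hD p hy d hd h1' hp' hq') := by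
  have hcd : c 1 = d 1 := by
    have := congrArg Prod.snd (hq.trans hq'.symm)
    simpa using this
  have hC := convex_closedBall (0 : ℂ) 1
  have := squareT (T := S' A f)
    (fun z : I × I => sh f p (AffineMap.lineMap (c z.1) (d z.1) (z.2 : ℝ)))
    (continuous_sh hD continuous_const
      (by simp only [AffineMap.lineMap_apply_module]; fun_prop))
    (fun z => sh_mem hD p.2 hy (by
      simpa using hC.lineMap_mem (x := c z.1) (y := d z.1) (by simpa using h1 _)
        (by simpa using h1' _) z.2.2))
    (shq hD p hy c hc h1 hp hq) (Path.refl q) (Path.refl p) (shq hD p hy d hd h1' hp' hq')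
    (by simp) (by intro t; simp [← hcd, hq]) (by simp [hp, hp']) (by simp)
  simpa [cl_refl] using this

/-- The retraction point. -/
noncomputable def rh (hD : Data A f) (p : S' A f) (hy : ‖p.1.2‖ < 1) : S A f :=
  ⟨sh f p (1 / 2), sh_mem hD p.2 hy.le (by norm_num), by simp⟩

lemma lm_norm {y : ℂ} (hy : ‖y‖ ≤ 1) (t : I) :
    ‖(AffineMap.lineMap y (1 / 2 : ℂ) (t : ℝ) : ℂ)‖ ≤ 1 := by
  have := (convex_closedBall (0 : ℂ) 1).lineMap_mem (x := y) (y := 1 / 2) (by simpa using hy)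
    (by simp; norm_num) t.2
  simpa using this

/-- straight path to the retraction point -/
noncomputable def Ep (hD : Data A f) (p : S' A f) (hy : ‖p.1.2‖ < 1) : Path p (inc (rh hD p hy)) :=
  shq hD p hy.le (fun t => AffineMap.lineMap p.1.2 (1 / 2) (t : ℝ))
    (by simp only [AffineMap.lineMap_apply_module]; fun_prop) (fun t => lm_norm hy.le t)
    (by simp) (by simp [inc, rh])

/-- `log (1/2)` -/
noncomputable def l2 : ℂ := ((- Real.log 2 : ℝ) : ℂ)

lemma exp_l2 : Complex.exp l2 = 1 / 2 := by
  unfold l2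
  rw [← Complex.ofReal_exp, Real.exp_neg, Real.exp_log (by norm_num)]
  norm_num

lemma exp_norm {z : ℂ} (hz : z.re ≤ 0) : ‖Complex.exp z‖ ≤ 1 := by
  rw [Complex.norm_exp]; simpa using hz

lemma ll_re {z : ℂ} (hz : z.re ≤ 0) (t : I) :
    (AffineMap.lineMap z l2 (t : ℝ) : ℂ).re ≤ 0 := by
  have hc : Convex ℝ {z : ℂ | z.re ≤ 0} := convex_halfSpace_re_le 0
  exact hc.lineMap_mem hz (by
    have : 0 ≤ Real.log 2 := Real.log_nonneg (by norm_num)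
    show l2.re ≤ 0
    rw [l2, Complex.ofReal_re]; linarith) t.2

/-- path to the retraction point avoiding `0` -/
noncomputable def ep (hD : Data A f) (p : S A f) (hy : ‖p.1.2‖ < 1) (z : ℂ) (hz : Complex.exp z = p.1.2)
    (hz0 : z.re ≤ 0) : Path p (rh hD (inc p) hy) :=
  shp hD p hy.le (fun t => Complex.exp (AffineMap.lineMap z l2 (t : ℝ)))
    (by simp only [AffineMap.lineMap_apply_module]; fun_prop) (fun t => exp_norm (ll_re hz0 t))
    (fun t => Complex.exp_ne_zero _) (by simp [hz]) (by simp [exp_l2, rh, inc])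

lemma Jm_ep (hD : Data A f) (p : S A f) (hy : ‖p.1.2‖ < 1) (z : ℂ) (hz : Complex.exp z = p.1.2)
    (hz0 : z.re ≤ 0) : Jm (cl (ep hD p hy z hz hz0)) = cl (Ep hD (inc p) hy) := by
  rw [Jm_cl (ep hD p hy z hz hz0) (shq hD (inc p) hy.le
    (fun t => Complex.exp (AffineMap.lineMap z l2 (t : ℝ)))
    (by simp only [AffineMap.lineMap_apply_module]; fun_prop) (fun t => exp_norm (ll_re hz0 t))
    (by simp [hz, inc]) (by simp [exp_l2, rh, inc]))]
  · exact shq_eq ..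
  · intro t; rfl

lemma log_re {y : ℂ} (hy : ‖y‖ < 1) : (Complex.log y).re ≤ 0 := by
  rw [Complex.log_re]
  exact Real.log_nonpos (norm_nonneg _) hy.le

lemma Jm_rot (hD : Data A f) (p : S A f) (hy : ‖p.1.2‖ ≤ 1) : Jm (cl (rot hD p hy)) = 𝟙 _ := by
  have := ro_cont
  rw [Jm_cl (rot hD p hy) (shq hD (inc p) hy (fun t => ro t * p.1.2) (by fun_prop)
    (fun t => by simpa using hy) (by simp [inc]) (by simp [inc]))]
  · refine (shq_eq hD _ _ _ _ _ _ _ (fun _ => p.1.2) continuous_const (fun _ => hy) (by simp)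
      (by rw [← inc_coe p, sh_self])).trans ?_
    rw [← cl_refl]
    congr 1
    ext1; funext t
    apply Subtype.ext
    exact sh_self f p.1
  · intro t; rfl

/-- path `ρ ∘ γ` -/
noncomputable def rhp (hD : Data A f) {p q : S' A f} (γ : Path p q) (h : ∀ t, ‖(γ t).1.2‖ < 1)
    (hp : ‖p.1.2‖ < 1) (hq : ‖q.1.2‖ < 1) : Path (rh hD p hp) (rh hD q hq) :=
  mkp (fun t => sh f (γ t) (1 / 2)) (continuous_sh hD (continuous_coe_path γ) continuous_const)
    (fun t => (rh hD (γ t) (h t)).2) (by simp [rh]) (by simp [rh])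

lemma Ep_nat (hD : Data A f) {p q : S' A f} (γ : Path p q) (h : ∀ t, ‖(γ t).1.2‖ < 1)
    (hp : ‖p.1.2‖ < 1) (hq : ‖q.1.2‖ < 1) :
    cl γ ≫ cl (Ep hD q hq) = cl (Ep hD p hp) ≫ Jm (cl (rhp hD γ h hp hq)) := by
  have h1 := continuous_coe_path γ
  rw [Jm_cl _ ((rhp hD γ h hp hq).map inc.continuous) (fun t => rfl)]
  refine squareT (fun z : I × I => sh f (γ z.1) (AffineMap.lineMap (γ z.1).1.2 (1 / 2) (z.2 : ℝ)))
    (continuous_sh hD (by fun_prop) (by simp only [AffineMap.lineMap_apply_module]; fun_prop))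
    (fun z => sh_mem hD (γ z.1).2 (h _).le (lm_norm (h _).le _)) _ _ _ _ ?_ ?_ ?_ ?_
  · intro t; simp
  · intro t; simp [Ep]
  · intro t; simp [Ep]
  · intro t
    have : (((rhp hD γ h hp hq).map inc.continuous) t).1 = sh f (γ t) (1 / 2) := rfl
    rw [this]; simp

/-- admissible connections -/
def Adm (hD : Data A f) (p : S' A f) (a : S A f)
    (α : FundamentalGroupoid.mk p ⟶ FundamentalGroupoid.mk (inc a)) : Prop :=
  (∀ h : p.1.2 ≠ 0, ∃ g : FundamentalGroupoid.mk (up p h) ⟶ FundamentalGroupoid.mk a, α = Jm g) ∧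
  (∀ h : ‖p.1.2‖ < 1, ∃ g : FundamentalGroupoid.mk (rh hD p h) ⟶ FundamentalGroupoid.mk a,
    α = cl (Ep hD p h) ≫ Jm g)

lemma adm_one (hD : Data A f) (a : S A f) : Adm hD (inc a) a (𝟙 _) := by
  refine ⟨fun h => ⟨𝟙 _, (Jm_id _).symm⟩, fun h => ?_⟩
  refine ⟨inv (cl (ep hD a h _ (Complex.exp_log a.2.2) (log_re h))), ?_⟩
  rw [Jm_inv]
  erw [Jm_ep hD a h]
  exact (IsIso.hom_inv_id _).symm

lemma adm_exists (hD : Data A f) (p : S' A f) : ∃ a α, Adm hD p a α := by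
  by_cases h : p.1.2 = 0
  · have hy : ‖p.1.2‖ < 1 := by simp [h]
    refine ⟨_, cl (Ep hD p hy), fun h' => absurd h h', fun h' => ⟨𝟙 _, ?_⟩⟩
    rw [Jm_id]
    exact (Category.comp_id _).symm
  · exact ⟨up p h, _, adm_one hD (up p h)⟩

theorem inc_surj (hD : Data A f) (a b : S A f)
    (g : FundamentalGroupoid.mk (inc a) ⟶ FundamentalGroupoid.mk (inc b)) :
    ∃ k : FundamentalGroupoid.mk a ⟶ FundamentalGroupoid.mk b, g = Jm k := by
  have key := gen (X := S' A f) (fun i : Bool => if i then {p : S' A f | p.1.2 ≠ 0} else {p | ‖p.1.2‖ < 1})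
    (by
      intro i; cases i
      · simpa using isOpen_lt (by fun_prop) (by fun_prop)
      · simpa using isOpen_ne_fun (by fun_prop) (by fun_prop))
    (by
      intro p
      by_cases h : p.1.2 = 0
      · exact ⟨false, by simp [h]⟩
      · exact ⟨true, by simpa using h⟩)
    (fun {p q} g => ∀ a α b β, Adm hD p a α → Adm hD q b β →
      ∃ k : FundamentalGroupoid.mk a ⟶ FundamentalGroupoid.mk b, g ≫ β = α ≫ Jm k)
    (by
      intro p q r g h hg hh a α b β hα hβ
      obtain ⟨c, δ, hδ⟩ := adm_exists hD q
      obtain ⟨k, hk⟩ := hg a α c δ hα hδ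
      obtain ⟨l, hl⟩ := hh c δ b β hδ hβ
      refine ⟨k ≫ l, ?_⟩
      rw [Category.assoc, hl, ← Category.assoc, hk, Jm_comp, Category.assoc])
    (by
      intro p q γ i hγ a α b β hα hβ
      cases i
      · have hγ' : ∀ t, ‖(γ t).1.2‖ < 1 := by simpa using hγ
        have hp : ‖p.1.2‖ < 1 := by simpa using hγ' 0
        have hq : ‖q.1.2‖ < 1 := by simpa using hγ' 1
        obtain ⟨k, hk⟩ := hα.2 hp
        obtain ⟨l, hl⟩ := hβ.2 hq
        refine ⟨inv k ≫ cl (rhp hD γ hγ' hp hq) ≫ l, ?_⟩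
        rw [hl, hk, ← Category.assoc, Ep_nat hD γ hγ' hp hq, Jm_comp, Jm_comp, Jm_inv]
        simp
      · have hγ' : ∀ t, (γ t).1.2 ≠ 0 := by simpa using hγ
        have hp : p.1.2 ≠ 0 := by simpa using hγ' 0
        have hq : q.1.2 ≠ 0 := by simpa using hγ' 1
        obtain ⟨k, hk⟩ := hα.1 hp
        obtain ⟨l, hl⟩ := hβ.1 hq
        let γ' : Path (up p hp) (up q hq) := mkp (T := S A f) (fun t => (γ t).1) (continuous_coe_path γ)
          (fun t => ⟨(γ t).2, hγ' t⟩) (by simp [up]) (by simp [up])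
        have e : cl γ = Jm (cl γ') := (Jm_cl γ' γ (fun t => rfl)).symm
        refine ⟨inv k ≫ cl γ' ≫ l, ?_⟩
        rw [hl, hk, Jm_comp, Jm_comp, Jm_inv, e]
        exact (IsIso.hom_inv_id_assoc (Jm k) _).symm) g
  obtain ⟨k, hk⟩ := key a _ b _ (adm_one hD a) (adm_one hD b)
  exact ⟨k, by simpa using hk⟩

end SL

namespace SL
open CategoryTheory unitInterval


variable {A : Finset ℝ} {f : ℂ → ℝ}

lemma exists_Q {X : Type} [TopologicalSpace X] {p0 : X}
    (t : FundamentalGroupoid.mk p0 ⟶ FundamentalGroupoid.mk p0)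
    (ht : ∀ g : FundamentalGroupoid.mk p0 ⟶ FundamentalGroupoid.mk p0, g ≫ t = t ≫ g) :
    ∃ (K : Type) (_ : Group K) (Q : (FundamentalGroupoid.mk p0 ⟶ FundamentalGroupoid.mk p0) → K),
      (∀ g h, Q (g ≫ h) = Q g * Q h) ∧ Q t = 1 ∧
      ∀ g : FundamentalGroup X p0, Q g = 1 → ∃ n : ℤ, (show FundamentalGroup X p0 from t) ^ n = g := by
  let t' : FundamentalGroup X p0 := t
  let N := Subgroup.zpowers t'
  have hN : N.Normal := by
    constructor
    intro n hn g
    have hc : Commute g t' := (ht g).symm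
    obtain ⟨k, hk⟩ := Subgroup.mem_zpowers_iff.1 hn
    have : g * n = n * g := by rw [← hk]; exact hc.zpow_right k
    rw [this, mul_inv_cancel_right]
    exact hn
  refine ⟨FundamentalGroup X p0 ⧸ N, inferInstance,
    fun g => (QuotientGroup.mk (s := N) (show FundamentalGroup X p0 from g))⁻¹, ?_, ?_, ?_⟩
  · intro g h
    rw [← mul_inv_rev, ← QuotientGroup.mk_mul]
    rfl
  · rw [inv_eq_one, QuotientGroup.eq_one_iff]
    exact Subgroup.mem_zpowers t'
  · intro g hg
    rw [inv_eq_one, QuotientGroup.eq_one_iff] at hg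
    exact Subgroup.mem_zpowers_iff.1 hg

/-- the path underlying a continuous map -/
def toP {X : Type*} [TopologicalSpace X] (γ : C(I, X)) : Path (γ 0) (γ 1) := ⟨γ, rfl, rfl⟩

lemma ep_rot (hD : Data A f) (p : S A f) (hy : ‖p.1.2‖ < 1) (z : ℂ) (hz : Complex.exp z = p.1.2)
    (hz0 : z.re ≤ 0) (w : ℂ) (hzw : w = z + 2 * Real.pi * Complex.I) (hw : Complex.exp w = p.1.2)
    (hw0 : w.re ≤ 0) :
    cl (ep hD p hy z hz hz0) = cl (rot hD p hy.le) ≫ cl (ep hD p hy w hw hw0) := by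
  have := squareT (T := S A f)
    (fun x : I × I => sh f p (Complex.exp
      (AffineMap.lineMap (z + 2 * Real.pi * (x.1 : ℝ) * Complex.I) l2 (x.2 : ℝ))))
    (continuous_sh hD continuous_const
      (by simp only [AffineMap.lineMap_apply_module]; fun_prop))
    (fun x => sh_memS hD p.2 hy.le (exp_norm (ll_re (by simpa using hz0) _)) (Complex.exp_ne_zero _))
    (rot hD p hy.le) (ep hD p hy w hw hw0) (ep hD p hy z hz hz0) (Path.refl _)
    (by intro t; simp [rot, ro, Complex.exp_add, hz, mul_comm]) (by intro t; simp [ep, hzw])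
    (by intro t; simp [ep])
    (by
      intro t
      have : ((Path.refl (rh hD (inc p) hy)) t).1 = sh f p (1 / 2) := rfl
      rw [this]
      simp [exp_l2])
  rw [this, cl_refl, Category.comp_id]


section ker
variable {K : Type} [Group K]

lemma Psi_one (Ψ : ∀ a b : S A f, (FundamentalGroupoid.mk a ⟶ FundamentalGroupoid.mk b) → K)
    (hΨ : ∀ a b c (g : FundamentalGroupoid.mk a ⟶ FundamentalGroupoid.mk b)
      (h : FundamentalGroupoid.mk b ⟶ FundamentalGroupoid.mk c),
      Ψ a c (g ≫ h) = Ψ a b g * Ψ b c h) (a : S A f) : Ψ a a (𝟙 _) = 1 := by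
  have := hΨ a a a (𝟙 _) (𝟙 _)
  simpa using this

lemma Psi_ep_nat (hD : Data A f)
    (Ψ : ∀ a b : S A f, (FundamentalGroupoid.mk a ⟶ FundamentalGroupoid.mk b) → K)
    (hΨ : ∀ a b c (g : FundamentalGroupoid.mk a ⟶ FundamentalGroupoid.mk b)
      (h : FundamentalGroupoid.mk b ⟶ FundamentalGroupoid.mk c),
      Ψ a c (g ≫ h) = Ψ a b g * Ψ b c h)
    (hrot : ∀ p (h : ‖p.1.2‖ < 1), Ψ p p (cl (rot hD p h.le)) = 1)
    (p : S A f) (hy : ‖p.1.2‖ < 1) (n : ℕ) : ∀ (z w : ℂ) (hz : Complex.exp z = p.1.2)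
    (hz0 : z.re ≤ 0) (hw : Complex.exp w = p.1.2) (hw0 : w.re ≤ 0)
    (_ : w = z + n * (2 * Real.pi * Complex.I)),
    Ψ _ _ (cl (ep hD p hy z hz hz0)) = Ψ _ _ (cl (ep hD p hy w hw hw0)) := by
  induction n with
  | zero =>
    intro z w hz hz0 hw hw0 h
    have : z = w := by simp [h]
    subst this; rfl
  | succ n ih =>
    intro z w hz hz0 hw hw0 h
    have e : Complex.exp (z + 2 * Real.pi * Complex.I) = p.1.2 := by
      rw [Complex.exp_periodic z, hz]
    have r : (z + 2 * Real.pi * Complex.I).re ≤ 0 := by simpa using hz0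
    rw [ep_rot hD p hy z hz hz0 _ rfl e r, hΨ, hrot p hy, one_mul]
    exact ih _ _ e r hw hw0 (by rw [h]; push_cast; ring)

lemma Psi_ep (hD : Data A f)
    (Ψ : ∀ a b : S A f, (FundamentalGroupoid.mk a ⟶ FundamentalGroupoid.mk b) → K)
    (hΨ : ∀ a b c (g : FundamentalGroupoid.mk a ⟶ FundamentalGroupoid.mk b)
      (h : FundamentalGroupoid.mk b ⟶ FundamentalGroupoid.mk c),
      Ψ a c (g ≫ h) = Ψ a b g * Ψ b c h)
    (hrot : ∀ p (h : ‖p.1.2‖ < 1), Ψ p p (cl (rot hD p h.le)) = 1)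
    (p : S A f) (hy : ‖p.1.2‖ < 1) (z w : ℂ) (hz : Complex.exp z = p.1.2)
    (hz0 : z.re ≤ 0) (hw : Complex.exp w = p.1.2) (hw0 : w.re ≤ 0) :
    Ψ _ _ (cl (ep hD p hy z hz hz0)) = Ψ _ _ (cl (ep hD p hy w hw hw0)) := by
  obtain ⟨n, hn⟩ := Complex.exp_eq_exp_iff_exists_int.1 (hw.trans hz.symm)
  obtain ⟨m, rfl | rfl⟩ := Int.eq_nat_or_neg n
  · exact Psi_ep_nat hD Ψ hΨ hrot p hy m z w hz hz0 hw hw0 (by simpa using hn)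
  · exact (Psi_ep_nat hD Ψ hΨ hrot p hy m w z hw hw0 hz hz0 (by rw [hn]; push_cast; ring)).symm

/-- lifting along the exponential -/
lemma exists_log_lift (g : C(I, ℂ)) (h0 : ∀ t, g t ≠ 0) :
    ∃ Γ : C(I, ℂ), ∀ t, Complex.exp (Γ t) = g t := by
  let g' : C(I, {z : ℂ // z ≠ 0}) := ⟨fun t => ⟨g t, h0 t⟩, by fun_prop⟩
  obtain ⟨Γ, h, -⟩ := Complex.isCoveringMap_exp.exists_path_lifts g' (Complex.log (g 0))
    (Subtype.ext (Complex.exp_log (h0 0)).symm)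
  exact ⟨Γ, fun t => congrArg Subtype.val (congrFun h t)⟩

lemma ep_square (hD : Data A f) {a b : S A f} (δ : Path a b) (hδ : ∀ t, ‖(δ t).1.2‖ < 1)
    (ha : ‖a.1.2‖ < 1) (hb : ‖b.1.2‖ < 1) (ε : Path (inc a) (inc b)) (hε : ∀ t, (ε t).1 = (δ t).1)
    (hε' : ∀ t, ‖(ε t).1.2‖ < 1) :
    ∃ z hz hz0 w hw hw0, cl δ ≫ cl (ep hD b hb w hw hw0) =
      cl (ep hD a ha z hz hz0) ≫ cl (rhp hD ε hε' ha hb) := by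
  obtain ⟨Γ, hΓ⟩ := exists_log_lift ⟨fun t => (δ t).1.2, by
    have := continuous_coe_path δ
    fun_prop⟩ (fun t => (δ t).2.2)
  simp only [ContinuousMap.coe_mk] at hΓ
  have hre : ∀ t, (Γ t).re ≤ 0 := by
    intro t
    have := hδ t
    rw [← hΓ, Complex.norm_exp] at this
    simpa using (Real.exp_lt_one_iff.1 this).le
  have h0 := hΓ 0
  have h1 := hΓ 1
  rw [δ.source] at h0
  rw [δ.target] at h1
  refine ⟨Γ 0, h0, hre 0, Γ 1, h1, hre 1, ?_⟩
  have hc := continuous_coe_path δ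
  have hΓc := Γ.continuous
  refine squareT (T := S A f)
    (fun x : I × I => sh f (δ x.1) (Complex.exp (AffineMap.lineMap (Γ x.1) l2 (x.2 : ℝ))))
    (continuous_sh hD (by fun_prop)
      (by simp only [AffineMap.lineMap_apply_module]; fun_prop))
    (fun x => sh_memS hD (δ x.1).2 (hδ _).le (exp_norm (ll_re (hre _) _)) (Complex.exp_ne_zero _))
    δ (ep hD b hb _ h1 (hre 1)) (ep hD a ha _ h0 (hre 0)) (rhp hD ε hε' ha hb) ?_ ?_ ?_ ?_
  · intro t; simp [hΓ]
  · intro t; simp [ep]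
  · intro t; simp [ep]
  · intro t; simp [rhp, exp_l2, hε]

end ker
end SL

namespace SL
open CategoryTheory unitInterval


variable {A : Finset ℝ} {f : ℂ → ℝ} {K : Type} [Group K]

/-- lift of a path off `y = 0` -/
noncomputable def upP (γ : C(I, S' A f)) (h : ∀ t, (γ t).1.2 ≠ 0) : Path (up (γ 0) (h 0)) (up (γ 1) (h 1)) :=
  mkp (fun t => (γ t).1) (by fun_prop)
    (fun t => (up (γ t) (h t)).2) rfl rfl

/-- the correction term -/
noncomputable def kk (hD : Data A f)
    (Ψ : ∀ a b : S A f, (FundamentalGroupoid.mk a ⟶ FundamentalGroupoid.mk b) → K)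
    (x : S' A f) (h : ‖x.1.2‖ < 1) : K :=
  if hx : x.1.2 ≠ 0 then
    Ψ (up x hx) (rh hD x h) (cl (ep hD (up x hx) h (Complex.log x.1.2) (Complex.exp_log hx) (log_re h)))
  else 1

/-- the cocycle on paths -/
noncomputable def phi (hD : Data A f)
    (Ψ : ∀ a b : S A f, (FundamentalGroupoid.mk a ⟶ FundamentalGroupoid.mk b) → K)
    (γ : C(I, S' A f)) : K :=
  if hU : ∀ t, (γ t).1.2 ≠ 0 then Ψ _ _ (cl (upP γ hU))
  else if hV : ∀ t, ‖(γ t).1.2‖ < 1 then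
    kk hD Ψ (γ 0) (hV 0) * Ψ _ _ (cl (rhp hD (toP γ) hV (hV 0) (hV 1))) * (kk hD Ψ (γ 1) (hV 1))⁻¹
  else 1

lemma phi_U (hD : Data A f)
    (Ψ : ∀ a b : S A f, (FundamentalGroupoid.mk a ⟶ FundamentalGroupoid.mk b) → K)
    (γ : C(I, S' A f)) {a b : S A f} (δ : Path a b) (h : ∀ t, (γ t).1 = (δ t).1) :
    phi hD Ψ γ = Ψ a b (cl δ) := by
  have hU : ∀ t, (γ t).1.2 ≠ 0 := fun t => by rw [h]; exact (δ t).2.2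
  have ha : a = up (γ 0) (hU 0) := Subtype.ext (by
    have := h 0
    rw [δ.source] at this
    exact this.symm)
  have hb : b = up (γ 1) (hU 1) := Subtype.ext (by
    have := h 1
    rw [δ.target] at this
    exact this.symm)
  subst ha hb
  rw [phi, dif_pos hU]
  congr 2
  ext1; funext t
  exact Subtype.ext (h t)

lemma phi_V (hD : Data A f)
    (Ψ : ∀ a b : S A f, (FundamentalGroupoid.mk a ⟶ FundamentalGroupoid.mk b) → K)
    (hΨ : ∀ a b c (g : FundamentalGroupoid.mk a ⟶ FundamentalGroupoid.mk b)
      (h : FundamentalGroupoid.mk b ⟶ FundamentalGroupoid.mk c),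
      Ψ a c (g ≫ h) = Ψ a b g * Ψ b c h)
    (hrot : ∀ p (h : ‖p.1.2‖ < 1), Ψ p p (cl (rot hD p h.le)) = 1)
    (γ : C(I, S' A f)) {a b : S' A f} (δ : Path a b) (h : ∀ t, γ t = δ t)
    (hV : ∀ t, ‖(δ t).1.2‖ < 1) (ha : ‖a.1.2‖ < 1) (hb : ‖b.1.2‖ < 1) :
    phi hD Ψ γ = kk hD Ψ a ha * Ψ _ _ (cl (rhp hD δ hV ha hb)) * (kk hD Ψ b hb)⁻¹ := by
  have ha' : γ 0 = a := (h 0).trans δ.source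
  have hb' : γ 1 = b := (h 1).trans δ.target
  subst ha' hb'
  have e : toP γ = δ := by
    ext1; funext t; exact h t
  subst e
  rw [phi]
  split_ifs with hU
  · obtain ⟨z, hz, hz0, w, hw, hw0, hs⟩ := ep_square hD (upP γ hU) hV ha hb (toP γ) (fun t => rfl) hV
    rw [kk, kk, dif_pos (hU 0), dif_pos (hU 1), eq_mul_inv_iff_mul_eq]
    have h1 := Psi_ep hD Ψ hΨ hrot (up (γ 0) (hU 0)) ha z _ hz hz0 (Complex.exp_log (hU 0)) (log_re ha)
    have h2 := Psi_ep hD Ψ hΨ hrot (up (γ 1) (hU 1)) hb w _ hw hw0 (Complex.exp_log (hU 1)) (log_re hb)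
    have := congrArg (Ψ _ _) hs
    rw [hΨ, hΨ, h1, h2] at this
    exact this
  · rfl
  · exact absurd hV ‹_›

lemma ker_Psi (hD : Data A f)
    (Ψ : ∀ a b : S A f, (FundamentalGroupoid.mk a ⟶ FundamentalGroupoid.mk b) → K)
    (hΨ : ∀ a b c (g : FundamentalGroupoid.mk a ⟶ FundamentalGroupoid.mk b)
      (h : FundamentalGroupoid.mk b ⟶ FundamentalGroupoid.mk c),
      Ψ a c (g ≫ h) = Ψ a b g * Ψ b c h)
    (hrot : ∀ p (h : ‖p.1.2‖ < 1), Ψ p p (cl (rot hD p h.le)) = 1)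
    (p : S A f) (g : FundamentalGroupoid.mk p ⟶ FundamentalGroupoid.mk p) (hg : Jm g = 𝟙 _) :
    Ψ p p g = 1 := by
  obtain ⟨γ, rfl⟩ := cl_surj g
  have hg' : cl (γ.map (inc (A := A) (f := f)).continuous) = cl (Path.refl (inc p)) := by
    rw [cl_refl]; rw [← hg]; exact (Jm_cl γ _ (fun t => rfl)).symm
  have hh : (γ.map (inc (A := A) (f := f)).continuous).Homotopic (Path.refl (inc p)) :=
    Quotient.exact hg'
  obtain ⟨F⟩ := hh
  let H : C(I × I, S' A f) := ⟨fun z => F (z.2, z.1), by fun_prop⟩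
  have key := vk_ker (X := S' A f) {x | x.1.2 ≠ 0} {x | ‖x.1.2‖ < 1}
    (isOpen_ne_fun (by fun_prop) (by fun_prop)) (isOpen_lt (by fun_prop) (by fun_prop))
    (by
      intro x
      by_cases hx : x.1.2 = 0
      · right; show ‖x.1.2‖ < 1; simp [hx]
      · left; exact hx)
    (phi hD Ψ) ?_ ?_ H ?_ (inc p) ?_ ?_ ?_
  · rw [← key]
    symm
    apply phi_U
    intro t
    show (F (0, t)).1 = _
    rw [F.apply_zero]
    rfl
  · intro x
    by_cases hx : x.1.2 = 0
    · have hx1 : ‖x.1.2‖ < 1 := by simp [hx]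
      rw [phi_V hD Ψ hΨ hrot (ContinuousMap.const I x) (Path.refl x) (fun t => rfl) (fun t => hx1) hx1 hx1]
      have : rhp hD (Path.refl x) (fun t => hx1) hx1 hx1 = Path.refl _ := by
        ext1; funext t; rfl
      rw [this, cl_refl, Psi_one Ψ hΨ]
      simp
    · rw [phi_U hD Ψ _ (Path.refl (up x hx)) (fun t => rfl), cl_refl, Psi_one Ψ hΨ]
  · intro Q hQ
    have hc := Q.continuous
    rcases hQ with hQ | hQ
    · have c1 : ∀ z, (Q z).1 ∈ S A f := fun z => ⟨(Q z).2, hQ z⟩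
      let a00 : S A f := ⟨_, c1 (0,0)⟩
      let a01 : S A f := ⟨_, c1 (0,1)⟩
      let a10 : S A f := ⟨_, c1 (1,0)⟩
      let a11 : S A f := ⟨_, c1 (1,1)⟩
      let γ1 : Path a00 a10 := mkp (fun t => (Q (t, 0)).1) (by fun_prop) (fun t => c1 _) rfl rfl
      let γ2 : Path a10 a11 := mkp (fun t => (Q (1, t)).1) (by fun_prop) (fun t => c1 _) rfl rfl
      let γ3 : Path a00 a01 := mkp (fun t => (Q (0, t)).1) (by fun_prop) (fun t => c1 _) rfl rfl
      let γ4 : Path a01 a11 := mkp (fun t => (Q (t, 1)).1) (by fun_prop) (fun t => c1 _) rfl rfl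
      rw [phi_U hD Ψ _ γ1 (fun t => rfl), phi_U hD Ψ _ γ2 (fun t => rfl),
        phi_U hD Ψ _ γ3 (fun t => rfl), phi_U hD Ψ _ γ4 (fun t => rfl), ← hΨ, ← hΨ]
      congr 1
      exact squareT (T := S A f) (fun z => (Q z).1) (by fun_prop) c1 γ1 γ2 γ3 γ4
        (fun t => rfl) (fun t => rfl) (fun t => rfl) (fun t => rfl)
    · have c1 : ∀ z, ‖(Q z).1.2‖ < 1 := fun z => hQ z
      let γ1 : Path (Q (0,0)) (Q (1,0)) := ⟨⟨fun t => Q (t, 0), by fun_prop⟩, rfl, rfl⟩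
      let γ2 : Path (Q (1,0)) (Q (1,1)) := ⟨⟨fun t => Q (1, t), by fun_prop⟩, rfl, rfl⟩
      let γ3 : Path (Q (0,0)) (Q (0,1)) := ⟨⟨fun t => Q (0, t), by fun_prop⟩, rfl, rfl⟩
      let γ4 : Path (Q (0,1)) (Q (1,1)) := ⟨⟨fun t => Q (t, 1), by fun_prop⟩, rfl, rfl⟩
      rw [phi_V hD Ψ hΨ hrot (Q.comp ⟨fun t => (t, 0), by fun_prop⟩) γ1 (fun t => rfl) (fun t => c1 _) (c1 _) (c1 _),
        phi_V hD Ψ hΨ hrot (Q.comp ⟨fun t => (1, t), by fun_prop⟩) γ2 (fun t => rfl) (fun t => c1 _) (c1 _) (c1 _),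
        phi_V hD Ψ hΨ hrot (Q.comp ⟨fun t => (0, t), by fun_prop⟩) γ3 (fun t => rfl) (fun t => c1 _) (c1 _) (c1 _),
        phi_V hD Ψ hΨ hrot (Q.comp ⟨fun t => (t, 1), by fun_prop⟩) γ4 (fun t => rfl) (fun t => c1 _) (c1 _) (c1 _)]
      have hs := squareT (T := S A f) (fun z => sh f (Q z).1 (1 / 2))
        (continuous_sh hD (by fun_prop) continuous_const) (fun z => (rh hD (Q z) (c1 z)).2)
        (rhp hD γ1 (fun t => c1 _) (c1 _) (c1 _)) (rhp hD γ2 (fun t => c1 _) (c1 _) (c1 _))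
        (rhp hD γ3 (fun t => c1 _) (c1 _) (c1 _)) (rhp hD γ4 (fun t => c1 _) (c1 _) (c1 _))
        (fun t => rfl) (fun t => rfl) (fun t => rfl) (fun t => rfl)
      have hs' := congrArg (Ψ _ _) hs
      rw [hΨ, hΨ] at hs'
      simp only [mul_assoc, inv_mul_cancel_left]
      rw [← mul_assoc (Ψ _ _ (cl (rhp hD γ1 _ _ _))), hs', mul_assoc]
  · intro t
    show (F (0, t)).1.2 ≠ 0
    rw [F.apply_zero]
    exact (γ t).2.2
  · intro t
    show F (1, t) = _
    rw [F.apply_one]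
    rfl
  · intro t
    exact F.source t
  · intro t
    exact F.target t

end SL

namespace SL
open CategoryTheory unitInterval


variable {A : Finset ℝ} {f : ℂ → ℝ}

lemma kernel (hD : Data A f) (p0 : S A f) (h0 : ‖p0.1.2‖ < 1)
    (g : FundamentalGroup (S A f) p0) (hg : Jm (show FundamentalGroupoid.mk p0 ⟶ FundamentalGroupoid.mk p0 from g) = 𝟙 _) :
    ∃ n : ℤ, (show FundamentalGroup (S A f) p0 from (cl (rot hD p0 h0.le) :)) ^ n = g := by
  obtain ⟨τ, h1, h2⟩ := central hD
  obtain ⟨K, _, Q, hQ, hQt, hQk⟩ := exists_Q (τ p0) (fun g => h1 g)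
  rw [← h2 p0 h0]
  let c : ∀ p : S A f, (FundamentalGroupoid.mk p0 ⟶ FundamentalGroupoid.mk p) :=
    fun p => cl (joinedS hD p0 p).somePath
  have hQ1 : Q (𝟙 _) = 1 := by
    have := hQ (𝟙 _) (𝟙 _)
    simpa using this
  have := ker_Psi hD (fun a b g => Q (c a ≫ g ≫ inv (c b)))
    (by intro a b d g h; rw [← hQ]; congr 1; simp)
    (by
      intro p h
      have : c p ≫ cl (rot hD p h.le) ≫ inv (c p) = τ p0 := by
        rw [← h2 p h, ← Category.assoc, h1 (c p), Category.assoc, IsIso.hom_inv_id, Category.comp_id]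
      rw [this, hQt]) p0 g hg
  apply hQk
  rw [hQ, hQ] at this
  have h3 : Q (c p0) * Q (inv (c p0)) = 1 := by
    rw [← hQ, IsIso.hom_inv_id, hQ1]
  have h4 : Q (inv (c p0)) = (Q (c p0))⁻¹ := eq_inv_of_mul_eq_one_right h3
  rw [h4, ← mul_assoc, mul_inv_eq_one] at this
  exact mul_eq_left.1 this

lemma core (hD : Data A f) (p0 : S A f) (h0 : ‖p0.1.2‖ < 1) :
    Nonempty (FundamentalGroup (S A f) p0 ≃*
      FundamentalGroup (S' A f) (inc p0) × Multiplicative ℤ) := by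
  obtain ⟨w, hw⟩ := exists_w hD p0 h0.le
  let t : FundamentalGroup (S A f) p0 := (cl (rot hD p0 h0.le) :)
  have hw' : w t = Multiplicative.ofAdd 1 := hw
  let J : FundamentalGroup (S A f) p0 →* FundamentalGroup (S' A f) (inc p0) :=
    FundamentalGroup.map inc p0
  have hJ : ∀ g : FundamentalGroup (S A f) p0, J g = Jm (show FundamentalGroupoid.mk p0 ⟶ FundamentalGroupoid.mk p0 from g) := fun g => rfl
  have hJt : J t = 1 := (hJ t).trans (Jm_rot hD p0 h0.le)
  refine ⟨MulEquiv.ofBijective (J.prod w) ⟨?_, ?_⟩⟩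
  · rw [injective_iff_map_eq_one]
    intro g hg
    have hg1 : J g = 1 := congrArg Prod.fst hg
    have hg2 : w g = 1 := congrArg Prod.snd hg
    obtain ⟨n, hn⟩ := kernel hD p0 h0 g hg1
    have hn' : t ^ n = g := hn
    rw [← hn', map_zpow, hw', ← ofAdd_zsmul, ofAdd_eq_one] at hg2
    have : n = 0 := by simpa using hg2
    rw [← hn', this, zpow_zero]
  · rintro ⟨g, m⟩
    obtain ⟨k, hk⟩ := inc_surj hD p0 p0 g
    let k' : FundamentalGroup (S A f) p0 := k
    have hk' : J k' = g := hk.symm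
    refine ⟨k' * t ^ (Multiplicative.toAdd ((w k')⁻¹ * m)), ?_⟩
    refine Prod.ext ?_ ?_
    · show J _ = g
      rw [map_mul, map_zpow, hJt, one_zpow, mul_one, hk']
    · show w _ = m
      rw [map_mul, map_zpow, hw', ← ofAdd_zsmul]
      simp

lemma core' (hD : Data A f) (p : S A f) :
    Nonempty (FundamentalGroup (S A f) p ≃*
      FundamentalGroup (S' A f) (inc p) × Multiplicative ℤ) := by
  obtain ⟨p0, h0⟩ : ∃ p0 : S A f, ‖p0.1.2‖ < 1 := by
    exact ⟨⟨_, high_mem hD (y := 1 / 2) (by norm_num)⟩, by norm_num⟩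
  obtain ⟨e⟩ := core hD p0 h0
  let γ := (joinedS hD p p0).somePath
  exact ⟨((FundamentalGroup.fundamentalGroupMulEquivOfPath γ).trans e).trans
    (MulEquiv.prodCongr (FundamentalGroup.fundamentalGroupMulEquivOfPath
      (γ.map inc.continuous)).symm (MulEquiv.refl _))⟩
end SL

namespace SL
open CategoryTheory unitInterval


/-- first new coordinate -/
def cu (a b c : ℝ) (p : ℂ × ℂ) : ℂ := a * p.1 + b * p.2 - c
/-- second new coordinate -/
def cv (a b : ℝ) (p : ℂ × ℂ) : ℂ := -b * p.1 + a * p.2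

lemma D_pos {a b : ℝ} (h : (a, b) ≠ (0, 0)) : 0 < a ^ 2 + b ^ 2 := by
  by_contra hh
  apply h
  have h1 : a ^ 2 = 0 := by nlinarith [sq_nonneg a, sq_nonneg b]
  have h2 : b ^ 2 = 0 := by nlinarith [sq_nonneg a, sq_nonneg b]
  simp_all

/-- the coordinate change -/
noncomputable def coordH (a b c s r : ℝ) (hD : 0 < a ^ 2 + b ^ 2) (hs : 0 < s) (hr : 0 < r) :
    (ℂ × ℂ) ≃ₜ (ℂ × ℂ) where
  toFun p := (s * cv a b p, r * cu a b c p)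
  invFun q := ((a * (q.2 / r + c) - b * (q.1 / s)) / (a ^ 2 + b ^ 2 : ℝ),
    (b * (q.2 / r + c) + a * (q.1 / s)) / (a ^ 2 + b ^ 2 : ℝ))
  left_inv p := by
    have h1 : ((a ^ 2 + b ^ 2 : ℝ) : ℂ) ≠ 0 := by exact_mod_cast hD.ne'
    have h2 : (s : ℂ) ≠ 0 := by exact_mod_cast hs.ne'
    have h3 : (r : ℂ) ≠ 0 := by exact_mod_cast hr.ne'
    refine Prod.ext ?_ ?_
    · simp only [cu, cv]
      field_simp
      push_cast
      ring
    · simp only [cu, cv]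
      field_simp
      push_cast
      ring
  right_inv q := by
    have h1 : ((a ^ 2 + b ^ 2 : ℝ) : ℂ) ≠ 0 := by exact_mod_cast hD.ne'
    have h2 : (s : ℂ) ≠ 0 := by exact_mod_cast hs.ne'
    have h3 : (r : ℂ) ≠ 0 := by exact_mod_cast hr.ne'
    refine Prod.ext ?_ ?_
    · simp only [cu, cv]
      field_simp
      push_cast
      ring
    · simp only [cu, cv]
      field_simp
      push_cast
      ring
  continuous_toFun := by unfold cu cv; fun_prop
  continuous_invFun := by fun_prop

lemma line_form {a b c : ℝ} (hab : (a, b) ≠ (0, 0)) {l : Set (ℂ × ℂ)} (hl : IsRealCLine l)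
    (hm : ∃ p : ℂ × ℂ, cu a b c p = 0 ∧ p ∈ l) (hne : l ≠ {p | cu a b c p = 0}) :
    ∃ α μ : ℝ, ∀ p : ℂ × ℂ, p ∈ l ↔ cv a b p = α + μ * cu a b c p := by
  obtain ⟨A, B, C, hAB, rfl⟩ := hl
  have hD := D_pos hab
  have hE := D_pos hAB
  have hDc : ((a ^ 2 + b ^ 2 : ℝ) : ℂ) ≠ 0 := by exact_mod_cast hD.ne'
  have hEc : ((A ^ 2 + B ^ 2 : ℝ) : ℂ) ≠ 0 := by exact_mod_cast hE.ne'
  push_cast at hDc hEc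
  by_cases hk : a * B - b * A = 0
  · exfalso
    apply hne
    obtain ⟨p, hp1, hp2⟩ := hm
    have hkc : (a : ℂ) * B - b * A = 0 := by exact_mod_cast hk
    have hp2' : (A : ℂ) * p.1 + B * p.2 = C := hp2
    unfold cu at hp1
    ext q
    show (A : ℂ) * q.1 + B * q.2 = C ↔ a * q.1 + b * q.2 - c = 0
    constructor
    · intro h
      apply mul_left_cancel₀ hEc
      linear_combination (A * a + B * b : ℂ) * (h - hp2') + hp1 * (A ^ 2 + B ^ 2 : ℂ)
        - hkc * ((-B) * (q.1 - p.1) + A * (q.2 - p.2))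
    · intro h
      apply mul_left_cancel₀ hDc
      linear_combination (A * a + B * b : ℂ) * (h - hp1) + hp2' * (a ^ 2 + b ^ 2 : ℂ)
        + hkc * ((-b) * (q.1 - p.1) + a * (q.2 - p.2))
  · have hkc : (a : ℂ) * B - b * A ≠ 0 := by exact_mod_cast hk
    refine ⟨(C * (a ^ 2 + b ^ 2) - (A * a + B * b) * c) / (a * B - b * A),
      -(A * a + B * b) / (a * B - b * A), fun p => ?_⟩
    show (A : ℂ) * p.1 + B * p.2 = C ↔ _
    unfold cu cv
    push_cast
    constructor
    · intro h
      field_simp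
      linear_combination h * (a ^ 2 + b ^ 2 : ℂ)
    · intro h
      field_simp at h
      apply mul_left_cancel₀ hDc
      linear_combination h

lemma homeo_pi {X Y : Type} [TopologicalSpace X] [TopologicalSpace Y] (e : X ≃ₜ Y) (x : X) :
    Nonempty (FundamentalGroup X x ≃* FundamentalGroup Y (e x)) := by
  have := (FundamentalGroupoidFunctor.equivOfHomotopyEquiv e.toHomotopyEquiv).fullyFaithfulFunctor
  exact ⟨this.mulEquivEnd (FundamentalGroupoid.mk x)⟩

/-- cut-off -/
noncomputable def bump (x : ℂ) (d : ℝ) : ℝ := max 0 (min 1 (2 - ‖x - (d : ℂ)‖))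

lemma bump_nonneg (x : ℂ) (d : ℝ) : 0 ≤ bump x d := le_max_left _ _
lemma bump_le (x : ℂ) (d : ℝ) : bump x d ≤ 1 := max_le (by norm_num) (min_le_left _ _)
lemma bump_one {x : ℂ} {d : ℝ} (h : ‖x - (d : ℂ)‖ ≤ 1) : bump x d = 1 := by
  unfold bump
  rw [min_eq_left (by linarith), max_eq_right (by norm_num)]
lemma bump_zero {x : ℂ} {d : ℝ} (h : 2 ≤ ‖x - (d : ℂ)‖) : bump x d = 0 := by
  unfold bump
  rw [max_eq_left]
  exact (min_le_right _ _).trans (by linarith)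

lemma bump_far {x : ℂ} {d e : ℝ} (h : ‖x - (d : ℂ)‖ ≤ 1) (hde : 3 ≤ |d - e|) : bump x e = 0 := by
  apply bump_zero
  have h1 : ‖((d - e : ℝ) : ℂ)‖ = |d - e| := by rw [Complex.norm_real, Real.norm_eq_abs]
  have h2 : ((d - e : ℝ) : ℂ) = (x - e) - (x - d) := by push_cast; ring
  have h3 := norm_sub_le (x - (e : ℂ)) (x - d)
  rw [← h2, h1] at h3
  linarith

lemma exists_data {ι : Type} (T : Finset ι) (α μ : ι → ℝ)
    (hsep : ∀ i ∈ T, ∀ j ∈ T, i ≠ j → 3 ≤ |α i - α j|) (hμ : ∑ i ∈ T, |μ i| ≤ 1 / 8) :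
    ∃ f : ℂ → ℝ, Data (T.image α) f ∧ ∀ i ∈ T, f (α i : ℂ) = μ i := by
  have hval : ∀ i ∈ T, ∀ x : ℂ, ‖x - (α i : ℂ)‖ ≤ 1 → ∑ j ∈ T, μ j * bump x (α j) = μ i := by
    intro i hi x hx
    rw [Finset.sum_eq_single_of_mem i hi, bump_one hx, mul_one]
    intro j hj hji
    rw [bump_far hx (hsep i hi j hj hji.symm), mul_zero]
  refine ⟨fun x => ∑ i ∈ T, μ i * bump x (α i), ⟨?_, ?_, ?_⟩, ?_⟩
  · unfold bump
    fun_prop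
  · intro x
    refine (Finset.abs_sum_le_sum_abs _ _).trans (le_trans (Finset.sum_le_sum fun i _ => ?_) hμ)
    rw [abs_mul, abs_of_nonneg (bump_nonneg _ _)]
    exact mul_le_of_le_one_right (abs_nonneg _) (bump_le _ _)
  · intro a ha x hx
    obtain ⟨i, hi, rfl⟩ := Finset.mem_image.1 ha
    show ∑ j ∈ T, μ j * bump x (α j) = ∑ j ∈ T, μ j * bump (α i : ℂ) (α j)
    rw [hval i hi x hx, hval i hi _ (by simp)]
  · intro i hi
    exact hval i hi _ (by simp)

lemma exists_scale {ι : Type} (T : Finset ι) (α : ι → ℝ) (hinj : ∀ i ∈ T, ∀ j ∈ T, α i = α j → i = j) :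
    ∃ s : ℝ, 0 < s ∧ ∀ i ∈ T, ∀ j ∈ T, i ≠ j → 3 ≤ |s * α i - s * α j| := by
  refine ⟨1 + ∑ q ∈ T ×ˢ T, 3 / |α q.1 - α q.2|, ?_, ?_⟩
  · have : 0 ≤ ∑ q ∈ T ×ˢ T, 3 / |α q.1 - α q.2| := Finset.sum_nonneg fun _ _ => by positivity
    linarith
  · intro i hi j hj hij
    have h0 : 0 < |α i - α j| := by
      rw [abs_pos, sub_ne_zero]
      exact fun h => hij (hinj i hi j hj h)
    have h1 : 3 / |α i - α j| ≤ ∑ q ∈ T ×ˢ T, 3 / |α q.1 - α q.2| :=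
      Finset.single_le_sum (f := fun q : ι × ι => 3 / |α q.1 - α q.2|)
        (fun _ _ => by positivity) (Finset.mk_mem_product hi hj)
    have h2 : 3 / |α i - α j| ≤ |1 + (∑ q ∈ T ×ˢ T, 3 / |α q.1 - α q.2| : ℝ)| :=
      le_trans (by linarith) (le_abs_self _)
    rw [← mul_sub, abs_mul]
    rwa [div_le_iff₀ h0] at h2

end SL

/-- If a real line arrangement `𝓛 = 𝓛' ∪ {L₀}` is such that `L₀` is a
simple line (it meets every line of `𝓛'` in a distinct double point), then
`π₁(ℂ² \ 𝓛) ≅ π₁(ℂ² \ 𝓛') × ℤ`. -/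
theorem affine_simple_line_splits_Z
    (L' : Finset (Set (ℂ × ℂ))) (L₀ : Set (ℂ × ℂ))
    (hL' : ∀ l ∈ L', IsRealCLine l) (hL₀ : IsRealCLine L₀) (hne : L₀ ∉ L')
    -- `L₀` meets every line of `𝓛'`:
    (hmeet : ∀ l ∈ L', ∃ p, p ∈ L₀ ∧ p ∈ l)
    -- each such intersection point is a double point of `𝓛` (no third line through it),
    -- so in particular the intersection points with distinct lines of `𝓛'` are distinct:
    (hsimple : ∀ l ∈ L', ∀ p, p ∈ L₀ → p ∈ l → ∀ l' ∈ L', l' ≠ l → p ∉ l')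
    (x₀ : ℂ × ℂ) (hx₀ : ∀ l ∈ insert L₀ L', x₀ ∉ l) :
    Nonempty
      (FundamentalGroup {p : ℂ × ℂ // ∀ l ∈ insert L₀ L', p ∉ l} ⟨x₀, hx₀⟩ ≃*
        (FundamentalGroup {p : ℂ × ℂ // ∀ l ∈ L', p ∉ l}
            ⟨x₀, fun l hl => hx₀ l (Finset.mem_insert_of_mem hl)⟩ ×
          Multiplicative ℤ)) := by
  obtain ⟨a, b, c, hab, hL⟩ := hL₀
  have hmem0 : ∀ p, p ∈ L₀ ↔ SL.cu a b c p = 0 := by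
    intro p
    rw [hL]
    show _ = _ ↔ _
    rw [SL.cu, sub_eq_zero]
  have hL0 : L₀ = {p | SL.cu a b c p = 0} := Set.ext hmem0
  have hform : ∀ l ∈ L', ∃ α μ : ℝ, ∀ p : ℂ × ℂ, p ∈ l ↔ SL.cv a b p = α + μ * SL.cu a b c p := by
    intro l hl
    refine SL.line_form hab (hL' l hl) ?_ ?_
    · obtain ⟨p, h1, h2⟩ := hmeet l hl
      exact ⟨p, (hmem0 p).1 h1, h2⟩
    · intro h
      exact hne (by rw [hL0, ← h]; exact hl)
  choose! α μ hαμ using hform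
  have hD := SL.D_pos hab
  have hinj : ∀ i ∈ L', ∀ j ∈ L', α i = α j → i = j := by
    intro i hi j hj hij
    by_contra hne'
    obtain ⟨p, h1, h2⟩ := hmeet i hi
    refine hsimple i hi p h1 h2 j hj (Ne.symm hne') ?_
    rw [hαμ j hj, ← hij]
    have := (hαμ i hi p).1 h2
    rw [(hmem0 p).1 h1] at this ⊢
    simpa using this
  obtain ⟨s, hs, hsep⟩ := SL.exists_scale L' α hinj
  let M : ℝ := ∑ l ∈ L', |s * μ l|
  have hM : 0 ≤ M := Finset.sum_nonneg fun _ _ => abs_nonneg _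
  let r : ℝ := 8 * M + 1
  have hr : 0 < r := by positivity
  obtain ⟨f, hf, hfv⟩ := SL.exists_data L' (fun l => s * α l) (fun l => s * μ l / r) hsep (by
    simp only [abs_div, abs_of_pos hr]
    rw [← Finset.sum_div, div_le_iff₀ hr]
    show M ≤ 1 / 8 * (8 * M + 1)
    linarith)
  let Φ := SL.coordH a b c s r hD hs hr
  have hΦ : ∀ p, Φ p = (s * SL.cv a b p, r * SL.cu a b c p) := fun p => rfl
  have hsc : (s : ℂ) ≠ 0 := by exact_mod_cast hs.ne'
  have hrc : (r : ℂ) ≠ 0 := by exact_mod_cast hr.ne'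
  have hS' : ∀ p, (∀ l ∈ L', p ∉ l) ↔ Φ p ∈ SL.S' (L'.image fun l => s * α l) f := by
    intro p
    show _ ↔ ∀ d ∈ (L'.image fun l => s * α l), (Φ p).1 ≠ _
    rw [Finset.forall_mem_image]
    refine forall₂_congr fun l hl => ?_
    rw [hfv l hl, hαμ l hl, hΦ]
    apply not_congr
    push_cast
    constructor
    · intro h
      rw [h]
      field_simp
    · intro h
      apply mul_left_cancel₀ hsc
      rw [h]
      field_simp
  have hS : ∀ p, (∀ l ∈ insert L₀ L', p ∉ l) ↔ Φ p ∈ SL.S (L'.image fun l => s * α l) f := by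
    intro p
    show _ ↔ (Φ p ∈ SL.S' _ _ ∧ (Φ p).2 ≠ 0)
    rw [← hS', Finset.forall_mem_insert, hmem0, hΦ, and_comm]
    simp [hrc]
  obtain ⟨e1⟩ := SL.homeo_pi (Φ.subtype hS) ⟨x₀, hx₀⟩
  obtain ⟨e2⟩ := SL.homeo_pi (Φ.subtype hS') ⟨x₀, fun l hl => hx₀ l (Finset.mem_insert_of_mem hl)⟩
  obtain ⟨e⟩ := SL.core' hf (Φ.subtype hS ⟨x₀, hx₀⟩)
  exact ⟨(e1.trans e).trans (MulEquiv.prodCongr e2.symm (MulEquiv.refl _))⟩
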